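/- arXiv:2310.18202 — 2 statements merged into one kernel-verified Lean document; each statement's English description precedes it below -/
import Mathlib

section
/- Let F be a graph, let C be a cycle of length ℓ ≥ 3, and let σ : C → F be a homomorphism, so that (C, σ) is an F-coloured cycle. Then the following are equivalent: (1) (C, σ) is F-abundant as a coloured graph; (2) for every injection c : V(F) → ℤ, the cycle-equation of C with respect to σ and c is not convex; (3) for every injection c : V(F) → ℤ, the cycle-equation of C with respect to σ and c has genus at least 2. -/
/-- `f` is a copy map from `F` into `G`: an injective map sending edges to edges. -/
def IsCopyMap {α β : Type*} (F : SimpleGraph α) (G : SimpleGraph β) (f : α → β) : Prop :=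
  Function.Injective f ∧ ∀ a b, F.Adj a b → G.Adj (f a) (f b)

/-- `G` is uniformly `ε`-far from `F`-free, with witnessing `F`-partition given by the
homomorphism `π : G →g F` (the parts are `V_i = π⁻¹(i)`): there is a collection `𝒞` of
pairwise edge-disjoint copies of `F` in `G`, each placed so that the vertex playing the
role of `i ∈ V(F)` lies in `V_i`, such that every vertex of `G` lies in at least
`ε·|V(G)|` copies of `F` from `𝒞`. -/
def UniformlyFarWith {α β : Type*} (F : SimpleGraph α) (G : SimpleGraph β)
    (π : G →g F) (ε : ℝ) : Prop :=
  ∃ 𝒞 : Set (α → β),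
    (∀ f ∈ 𝒞, IsCopyMap F G f ∧ ∀ a, π (f a) = a) ∧
    (∀ f ∈ 𝒞, ∀ g ∈ 𝒞, f ≠ g → ∀ a b a' b', F.Adj a b → F.Adj a' b' →
      s(f a, f b) ≠ s(g a', g b')) ∧
    (∀ v : β, ε * (Nat.card β : ℝ) ≤ (({x ∈ 𝒞 | v ∈ Set.range x}).ncard : ℝ))

/-- An `F`-coloured graph `(H, σ)` is `F`-abundant: there are constants `c, C > 0` such
that for every `ε ∈ (0,1)` and all sufficiently large `n`, every `n`-vertex graph `G`
that is uniformly `ε`-far from `F`-free with `F`-partition induced by `π : G →g F`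
contains at least `c·ε^C·n^{|V(H)|}` injective homomorphisms of `H` into `G` mapping
each vertex `v` of `H` into the part `V_{σ(v)}`. -/
def ColouredAbundant {α β : Type*} (F : SimpleGraph α) (H : SimpleGraph β)
    (σ : H →g F) : Prop :=
  ∃ c C : ℝ, 0 < c ∧ 0 < C ∧ ∀ ε : ℝ, 0 < ε → ε < 1 → ∃ n₀ : ℕ, ∀ n : ℕ, n₀ ≤ n →
    ∀ G : SimpleGraph (Fin n), ∀ π : G →g F, UniformlyFarWith F G π ε →
      c * ε ^ C * (n : ℝ) ^ (Nat.card β) ≤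
        (({f : β → Fin n | IsCopyMap H G f ∧ ∀ v, π (f v) = σ v}).ncard : ℝ)

/-!
All three conditions say that `σ` is not injective. If `σ i = σ j` with `i ≠ j`, the two arcs of the
cycle between `i` and `j` split every cycle-equation into two parts with zero sum, so the genus is
at least two and, the coefficients being nonzero, the equation is not convex. If `σ` is injective,
letting `c` increase along the cycle gives a convex equation.

If `σ` is not injective, the cycle consists of two closed walks through a common colour. In a
uniformly far graph, a second moment argument finds a positive proportion of pairs of vertices of
that colour that have, for both closed walks, linearly many common neighbours of the next colour
along the given copies of `F`. For all but few of these pairs, following the edge-disjoint copies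
step by step produces many walks of each kind, and pasting them together gives many homomorphic
cycles.

If `σ` is injective, a Behrend-type set `S` without nontrivial solutions of convex equations yields
the Ruzsa–Szemerédi graph with copies `a ↦ (a, x + c a • s)` of `F`, `s ∈ S`. A coloured cycle in it
solves the convex cycle-equation in `S`, hence lies on one of these copies, and these are too few.

Counting homomorphisms instead of injective ones is harmless: few maps fail to be injective, and
blowing up a graph turns a bound for injective homomorphisms in large graphs into one for all
homomorphisms in all graphs.
-/

open Finset Function SimpleGraph

section ZeroSumEquations

variable {ι : Type*}

/-- The linear equation `∑ i, a i * x i = 0` is convex: exactly one coefficient is negative.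
Coefficients are only required to be nonnegative elsewhere, as cycle-equations have nonzero ones. -/
def IsConvexEquation (a : ι → ℤ) : Prop :=
  ∃ i₀, a i₀ < 0 ∧ ∀ j, j ≠ i₀ → 0 ≤ a j

/-- The linear equation `∑ i, a i * x i = 0` has genus at least two: its index set splits into two
nonempty parts with zero coefficient sum (further parts of a partition may be merged). -/
def HasGenusAtLeastTwo [Fintype ι] [DecidableEq ι] (a : ι → ℤ) : Prop :=
  ∃ T : Finset ι, T.Nonempty ∧ Tᶜ.Nonempty ∧ ∑ i ∈ T, a i = 0 ∧ ∑ i ∈ Tᶜ, a i = 0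

theorem HasGenusAtLeastTwo.not_isConvexEquation [Fintype ι] [DecidableEq ι] {a : ι → ℤ}
    (hgenus : HasGenusAtLeastTwo a) (ha : ∀ i, a i ≠ 0) : ¬ IsConvexEquation a := by
  rintro ⟨i₀, -, hnonneg⟩
  have sum_pos_of_notMem : ∀ S : Finset ι, S.Nonempty → i₀ ∉ S → 0 < ∑ i ∈ S, a i :=
    fun S hS hi₀ => sum_pos
      (fun j hj => (hnonneg j (ne_of_mem_of_not_mem hj hi₀)).lt_of_ne' (ha j)) hS
  obtain ⟨T, hT, hTc, hsum, hsumc⟩ := hgenus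
  by_cases hi₀ : i₀ ∈ T
  · exact (sum_pos_of_notMem Tᶜ hTc (by simpa using hi₀)).ne' hsumc
  · exact (sum_pos_of_notMem T hT hi₀).ne' hsum

theorem exists_injective_comp_eq_natCast {α : Type*} [Countable α] {σ : ι → α} (hσ : Injective σ)
    {f : ι → ℕ} (hf : Injective f) : ∃ c : α → ℤ, Injective c ∧ ∀ i, c (σ i) = f i := by
  obtain ⟨g, hg⟩ := exists_injective_nat α
  refine ⟨extend σ (fun i => (f i : ℤ)) fun x => -(g x : ℤ) - 1, ?_, hσ.extend_apply _ _⟩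
  intro x y hxy
  by_cases hx : ∃ i, σ i = x <;> by_cases hy : ∃ i, σ i = y
  · obtain ⟨⟨i, rfl⟩, j, rfl⟩ := hx, hy
    rw [hσ.extend_apply, hσ.extend_apply] at hxy
    exact congrArg σ (hf (by exact_mod_cast hxy))
  · obtain ⟨i, rfl⟩ := hx
    rw [hσ.extend_apply, extend_apply' _ _ _ hy] at hxy
    omega
  · obtain ⟨j, rfl⟩ := hy
    rw [hσ.extend_apply, extend_apply' _ _ _ hx] at hxy
    omega
  · rw [extend_apply' _ _ _ hx, extend_apply' _ _ _ hy] at hxy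
    exact hg (by omega)

end ZeroSumEquations

section CycleEquation

open scoped Fin.NatCast Fin.CommRing

variable {α : Type*} {F : SimpleGraph α} {ℓ : ℕ} [NeZero ℓ]

theorem cycleGraph_adj_add_one (hℓ : 2 ≤ ℓ) (i : Fin ℓ) : (cycleGraph ℓ).Adj i (i + 1) := by
  obtain ⟨k, rfl⟩ := Nat.exists_eq_add_of_le' hℓ
  rw [cycleGraph_adj]
  right
  simp

theorem eq_add_one_or_eq_add_one_of_cycleGraph_adj {i j : Fin ℓ} (h : (cycleGraph ℓ).Adj i j) :
    j = i + 1 ∨ i = j + 1 := by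
  have hℓ : 2 ≤ ℓ := by
    have := Fin.val_ne_of_ne h.ne
    omega
  obtain ⟨k, rfl⟩ := Nat.exists_eq_add_of_le' hℓ
  rw [cycleGraph_adj, sub_eq_iff_eq_add', sub_eq_iff_eq_add'] at h
  simpa only [add_comm] using h.symm

theorem sum_add_one_sub_eq_zero {M : Type*} [AddCommGroup M] (x : Fin ℓ → M) :
    ∑ i, (x (i + 1) - x i) = 0 := by
  rw [sum_sub_distrib, sub_eq_zero]
  exact Equiv.sum_comp (Equiv.addRight 1) x

theorem sum_Ico_add_one_sub {M : Type*} [AddCommGroup M] (x : Fin ℓ → M) {i j : Fin ℓ}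
    (hij : i ≤ j) : ∑ k ∈ Ico i j, (x (k + 1) - x k) = x j - x i := by
  have hval : ∀ k : Fin ℓ, x k = x (k.val : Fin ℓ) := by simp
  rw [hval i, hval j, ← sum_Ico_sub (fun k : ℕ => x k) hij, ← Fin.map_valEmbedding_Ico, sum_map]
  simp

/-- The coefficient of the edge `{i, i + 1}` in the cycle-equation of a closed walk `σ`. -/
def cycleCoeff (σ : Fin ℓ → α) (c : α → ℤ) (i : Fin ℓ) : ℤ := c (σ (i + 1)) - c (σ i)

theorem sum_cycleCoeff (σ : Fin ℓ → α) (c : α → ℤ) : ∑ i, cycleCoeff σ c i = 0 :=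
  sum_add_one_sub_eq_zero (c ∘ σ)

theorem cycleCoeff_ne_zero (hℓ : 2 ≤ ℓ) (σ : cycleGraph ℓ →g F) {c : α → ℤ} (hc : Injective c)
    (i : Fin ℓ) : cycleCoeff σ c i ≠ 0 :=
  sub_ne_zero.2 (hc.ne (σ.map_adj (cycleGraph_adj_add_one hℓ i)).ne')

theorem hasGenusAtLeastTwo_cycleCoeff {σ : Fin ℓ → α} (hσ : ¬ Injective σ) (c : α → ℤ) :
    HasGenusAtLeastTwo (cycleCoeff σ c) := by
  obtain ⟨i, j, hij, hne⟩ := not_injective_iff.1 hσ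
  wlog hlt : i < j generalizing i j
  · exact this j i hij.symm hne.symm (hne.lt_or_gt.resolve_left hlt)
  have hsum : ∑ k ∈ Ico i j, cycleCoeff σ c k = 0 := by
    simp only [cycleCoeff, sum_Ico_add_one_sub (fun k => c (σ k)) hlt.le, hij, sub_self]
  refine ⟨Ico i j, ⟨i, by simpa⟩, ⟨j, by simp⟩, hsum, ?_⟩
  rw [← sum_cycleCoeff σ c, ← sum_add_sum_compl (Ico i j), hsum, zero_add]

theorem exists_isConvexEquation_cycleCoeff [Countable α] (hℓ : 2 ≤ ℓ) {σ : Fin ℓ → α}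
    (hσ : Injective σ) : ∃ c : α → ℤ, Injective c ∧ IsConvexEquation (cycleCoeff σ c) := by
  obtain ⟨c, hc, hval⟩ := exists_injective_comp_eq_natCast hσ Fin.val_injective
  obtain ⟨k, rfl⟩ := Nat.exists_eq_add_of_le' (one_le_two.trans hℓ)
  refine ⟨c, hc, Fin.last k, ?_, fun j hj => ?_⟩
  · simp only [cycleCoeff, hval, Fin.last_add_one, Fin.val_zero, Fin.val_last]
    omega
  · simp [cycleCoeff, hval, Fin.val_add_one, hj]

theorem forall_not_isConvexEquation_cycleCoeff_iff [Countable α] (hℓ : 2 ≤ ℓ)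
    (σ : cycleGraph ℓ →g F) :
    (∀ c : α → ℤ, Injective c → ¬ IsConvexEquation (cycleCoeff σ c)) ↔ ¬ Injective σ := by
  refine ⟨fun h hσ => ?_, fun hσ c hc =>
    (hasGenusAtLeastTwo_cycleCoeff hσ c).not_isConvexEquation (cycleCoeff_ne_zero hℓ σ hc)⟩
  obtain ⟨c, hc, hconvex⟩ := exists_isConvexEquation_cycleCoeff hℓ hσ
  exact h c hc hconvex

theorem forall_hasGenusAtLeastTwo_cycleCoeff_iff [Countable α] (hℓ : 2 ≤ ℓ)
    (σ : cycleGraph ℓ →g F) :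
    (∀ c : α → ℤ, Injective c → HasGenusAtLeastTwo (cycleCoeff σ c)) ↔ ¬ Injective σ := by
  refine ⟨fun h => ?_, fun hσ c _ => hasGenusAtLeastTwo_cycleCoeff hσ c⟩
  exact (forall_not_isConvexEquation_cycleCoeff_iff hℓ σ).1 fun c hc =>
    (h c hc).not_isConvexEquation (cycleCoeff_ne_zero hℓ σ hc)

end CycleEquation

section Packings

variable {α β V : Type*} {F : SimpleGraph α} {G : SimpleGraph V} {H : SimpleGraph β}

/-- The homomorphisms from the `F`-coloured graph `(H, σ)` to the `F`-partitioned graph `(G, π)`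
that respect the colours. -/
def colouredHoms (σ : H →g F) (π : G →g F) : Set (H →g G) := {f | π.comp f = σ}

theorem mem_colouredHoms {σ : H →g F} {π : G →g F} {f : H →g G} :
    f ∈ colouredHoms σ π ↔ ∀ v, π (f v) = σ v :=
  DFunLike.ext_iff

/-- A packing of the `F`-partitioned graph `(G, π)` by properly placed edge-disjoint copies of `F`.
A properly placed homomorphism `F →g G` is a section of `π`, hence injective, and two of them can
share an edge only if they agree on some edge of `F`. -/
structure IsCopyPacking (π : G →g F) (𝒞 : Set (F →g G)) : Prop where
  apply_apply : ∀ f ∈ 𝒞, ∀ a, π (f a) = a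
  eq_of_adj : ∀ f ∈ 𝒞, ∀ g ∈ 𝒞, ∀ a b, F.Adj a b → f a = g a → f b = g b → f = g

theorem IsCopyPacking.mem_range_iff {π : G →g F} {𝒞 : Set (F →g G)} (h𝒞 : IsCopyPacking π 𝒞)
    {f : F →g G} (hf : f ∈ 𝒞) {v : V} : v ∈ Set.range f ↔ f (π v) = v := by
  refine ⟨?_, fun h => ⟨_, h⟩⟩
  rintro ⟨a, rfl⟩
  rw [h𝒞.apply_apply f hf]

theorem UniformlyFarWith.exists_isCopyPacking {π : G →g F} {ε : ℝ}
    (hfar : UniformlyFarWith F G π ε) : ∃ 𝒞 : Set (F →g G), IsCopyPacking π 𝒞 ∧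
      ∀ v, ε * Nat.card V ≤ ({f ∈ 𝒞 | f (π v) = v}.ncard : ℝ) := by
  obtain ⟨𝒮, hcopy, hdisj, hdeg⟩ := hfar
  have h𝒞 : IsCopyPacking π {f : F →g G | ⇑f ∈ 𝒮} := by
    refine ⟨fun f hf => (hcopy f hf).2, fun f hf g hg a b hab ha hb => ?_⟩
    by_contra hne
    exact hdisj f hf g hg (DFunLike.coe_injective.ne hne) a b a b hab hab (by rw [ha, hb])
  refine ⟨_, h𝒞, fun v => (hdeg v).trans_eq ?_⟩
  rw [← Set.ncard_image_of_injective _ (DFunLike.coe_injective (F := F →g G))]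
  congr 2
  ext f
  constructor
  · rintro ⟨hf, hv⟩
    let f' : F →g G := ⟨f, fun {a b} => (hcopy f hf).1.2 a b⟩
    exact ⟨f', ⟨hf, (h𝒞.mem_range_iff (f := f') hf).1 hv⟩, rfl⟩
  · rintro ⟨f, ⟨hf, hv⟩, rfl⟩
    exact ⟨hf, (h𝒞.mem_range_iff hf).2 hv⟩

theorem IsCopyPacking.uniformlyFarWith {π : G →g F} {ε : ℝ} {𝒞 : Set (F →g G)}
    (h𝒞 : IsCopyPacking π 𝒞) (hdeg : ∀ v, ε * Nat.card V ≤ ({f ∈ 𝒞 | f (π v) = v}.ncard : ℝ)) :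
    UniformlyFarWith F G π ε := by
  refine ⟨(⇑) '' 𝒞, ?_, ?_, fun v => (hdeg v).trans_eq ?_⟩
  · rintro _ ⟨f, hf, rfl⟩
    have hsection := h𝒞.apply_apply f hf
    exact ⟨⟨LeftInverse.injective hsection, fun a b => f.map_adj⟩, hsection⟩
  · rintro _ ⟨f, hf, rfl⟩ _ ⟨g, hg, rfl⟩ hne a b a' b' hab - heq
    refine hne (congrArg _ ?_)
    have colour_eq : ∀ {x y}, f x = g y → x = y := fun {x y} h => by
      rw [← h𝒞.apply_apply f hf x, h, h𝒞.apply_apply g hg]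
    rcases Sym2.eq_iff.1 heq with ⟨ha, hb⟩ | ⟨ha, hb⟩
    all_goals
      obtain rfl := colour_eq ha
      obtain rfl := colour_eq hb
      exact h𝒞.eq_of_adj f hf g hg _ _ hab ha hb
  · rw [← Set.ncard_image_of_injective _ (DFunLike.coe_injective (F := F →g G))]
    congr 2
    ext f
    constructor
    · rintro ⟨f, ⟨hf, hv⟩, rfl⟩
      exact ⟨⟨f, hf, rfl⟩, (h𝒞.mem_range_iff hf).2 hv⟩
    · rintro ⟨⟨f, hf, rfl⟩, hv⟩
      exact ⟨f, ⟨hf, (h𝒞.mem_range_iff hf).1 hv⟩, rfl⟩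

end Packings

section Blowup

variable {α β V W K : Type*} {F : SimpleGraph α} {G : SimpleGraph V} {H : SimpleGraph β}

/-- The projection of a blow-up of `G` onto `G`. -/
def blowupProj (e : W ≃ V × K) : (G.comap fun w => (e w).1) →g G where
  toFun w := (e w).1
  map_rel' h := h

section Field

variable [Field K]

/-- A copy of the homomorphism `f` in a blow-up of `G` by the field `K`, placed along the line
`a ↦ y + κ a * z`. Distinct lines meet in at most one point, so these copies are edge-disjoint. -/
def blowupCopy (e : W ≃ V × K) (κ : α → K) (f : F →g G) (y z : K) :
    F →g G.comap fun w => (e w).1 where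
  toFun a := e.symm (f a, y + κ a * z)
  map_rel' hab := by simpa using f.map_adj hab

variable {e : W ≃ V × K} {κ : α → K}

theorem blowupProj_comp_blowupCopy (f : F →g G) (y z : K) :
    (blowupProj e).comp (blowupCopy e κ f y z) = f := by
  ext a
  exact congrArg Prod.fst (e.apply_symm_apply _)

theorem blowupCopy_apply_eq_iff {f : F →g G} {y z : K} {a : α} {w : W} :
    blowupCopy e κ f y z a = w ↔ f a = (e w).1 ∧ y + κ a * z = (e w).2 := by
  rw [← Prod.mk_inj]
  exact e.symm_apply_eq

theorem blowupCopy_apply_eq_blowupCopy_apply {f f' : F →g G} {y z y' z' : K} {a : α} :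
    blowupCopy e κ f y z a = blowupCopy e κ f' y' z' a ↔
      f a = f' a ∧ y + κ a * z = y' + κ a * z' := by
  simp [blowupCopy]

theorem eq_and_eq_of_add_mul_eq_add_mul {y z y' z' p q : K} (hpq : p ≠ q)
    (hp : y + p * z = y' + p * z') (hq : y + q * z = y' + q * z') : y = y' ∧ z = z' := by
  have hz : z = z' := mul_left_cancel₀ (sub_ne_zero.2 hpq) (by linear_combination hp - hq)
  subst hz
  exact ⟨add_right_cancel hp, rfl⟩

theorem IsCopyPacking.blowup {π : G →g F} {𝒞 : Set (F →g G)} (h𝒞 : IsCopyPacking π 𝒞)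
    (e : W ≃ V × K) (hκ : Injective κ) :
    IsCopyPacking (π.comp (blowupProj e)) {g | ∃ f ∈ 𝒞, ∃ y z, blowupCopy e κ f y z = g} := by
  constructor
  · rintro _ ⟨f, hf, y, z, rfl⟩ a
    exact (congrArg π (DFunLike.congr_fun (blowupProj_comp_blowupCopy f y z) a)).trans
      (h𝒞.apply_apply f hf a)
  · rintro _ ⟨f, hf, y, z, rfl⟩ _ ⟨f', hf', y', z', rfl⟩ a b hab ha hb
    rw [blowupCopy_apply_eq_blowupCopy_apply] at ha hb
    obtain rfl := h𝒞.eq_of_adj f hf f' hf' a b hab ha.1 hb.1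
    obtain ⟨rfl, rfl⟩ := eq_and_eq_of_add_mul_eq_add_mul (hκ.ne hab.ne) ha.2 hb.2
    rfl

theorem card_mul_ncard_le_ncard_blowup [Finite α] [Nontrivial α] [Finite W]
    (hκ : Injective κ) (𝒞 : Set (F →g G)) (w : W) (a : α) :
    {f ∈ 𝒞 | f a = (e w).1}.ncard * Nat.card K ≤
      {g ∈ {g | ∃ f ∈ 𝒞, ∃ y z, blowupCopy e κ f y z = g} | g a = w}.ncard := by
  obtain ⟨b, hba⟩ := exists_ne a
  rw [← Set.ncard_univ, ← Set.ncard_prod]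
  refine Set.ncard_le_ncard_of_injOn
    (fun p => blowupCopy e κ p.1 ((e w).2 - κ a * p.2) p.2) ?_ ?_
  · rintro ⟨f, z⟩ ⟨⟨hf, hfa⟩, -⟩
    exact ⟨⟨f, hf, _, _, rfl⟩, blowupCopy_apply_eq_iff.2 ⟨hfa, sub_add_cancel _ _⟩⟩
  · rintro ⟨f, z⟩ - ⟨f', z'⟩ - heq
    have hcoord := fun x => blowupCopy_apply_eq_blowupCopy_apply.1 (DFunLike.congr_fun heq x)
    have hf : f = f' := DFunLike.ext _ _ fun x => (hcoord x).1
    have hz : z = z' :=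
      (eq_and_eq_of_add_mul_eq_add_mul (hκ.ne hba) (hcoord b).2 (hcoord a).2).2
    rw [hf, hz]

theorem UniformlyFarWith.blowup [Finite α] [Nontrivial α] [Finite W] {π : G →g F} {ε : ℝ}
    (hfar : UniformlyFarWith F G π ε) (e : W ≃ V × K) (hκ : Injective κ) :
    UniformlyFarWith F (G.comap fun w => (e w).1) (π.comp (blowupProj e)) ε := by
  obtain ⟨𝒞, h𝒞, hdeg⟩ := hfar.exists_isCopyPacking
  refine (h𝒞.blowup e hκ).uniformlyFarWith fun w => ?_
  calc ε * Nat.card W = ε * Nat.card V * Nat.card K := by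
        rw [Nat.card_congr e, Nat.card_prod, Nat.cast_mul, mul_assoc]
    _ ≤ {f ∈ 𝒞 | f (π (e w).1) = (e w).1}.ncard * Nat.card K := by gcongr; exact hdeg _
    _ ≤ _ := by exact_mod_cast card_mul_ncard_le_ncard_blowup hκ 𝒞 w _

end Field

theorem ncard_colouredHoms_blowup_le [Finite β] [Finite V] [Finite K] (e : W ≃ V × K)
    (σ : H →g F) (π : G →g F) :
    (colouredHoms σ (π.comp (blowupProj e))).ncard ≤
      (colouredHoms σ π).ncard * Nat.card K ^ Nat.card β := by
  rw [← Nat.card_fun, ← Set.ncard_univ, ← Set.ncard_prod]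
  refine Set.ncard_le_ncard_of_injOn (fun f => ((blowupProj e).comp f, fun v => (e (f v)).2)) ?_ ?_
  · intro f hf
    exact ⟨hf, Set.mem_univ _⟩
  · intro f _ f' _ heq
    refine DFunLike.ext _ _ fun v => e.injective (Prod.ext ?_ (congrFun (congrArg Prod.snd heq) v))
    exact DFunLike.congr_fun (congrArg Prod.fst heq) v

end Blowup

section HomAbundant

universe w

variable {α β V : Type*} {F : SimpleGraph α} {H : SimpleGraph β} {σ : H →g F}

/-- The variant of `ColouredAbundant` that counts all colour-respecting homomorphisms, injective or
not, in uniformly far graphs of any size whose vertex type lives in `Type w`. -/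
def HomAbundant (σ : H →g F) : Prop :=
  ∃ c C : ℝ, 0 < c ∧ 0 < C ∧ ∀ ε : ℝ, 0 < ε → ε < 1 →
    ∀ (V : Type w) [Finite V] [Nonempty V] (G : SimpleGraph V) (π : G →g F),
      UniformlyFarWith F G π ε →
        c * ε ^ C * (Nat.card V : ℝ) ^ Nat.card β ≤ ((colouredHoms σ π).ncard : ℝ)

theorem ncard_isCopyMap_le_ncard_colouredHoms [Finite β] [Finite V] {G : SimpleGraph V}
    (σ : H →g F) (π : G →g F) :
    {f : β → V | IsCopyMap H G f ∧ ∀ v, π (f v) = σ v}.ncard ≤ (colouredHoms σ π).ncard := by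
  rw [← Set.ncard_image_of_injective _ (DFunLike.coe_injective (F := H →g G))]
  refine Set.ncard_le_ncard (fun f hf => ?_) (Set.toFinite _)
  exact ⟨⟨f, fun {a b} => hf.1.2 a b⟩, mem_colouredHoms.2 hf.2, rfl⟩

theorem ncard_colouredHoms_le_add [Finite β] [Finite V] {G : SimpleGraph V}
    (σ : H →g F) (π : G →g F) :
    (colouredHoms σ π).ncard ≤ {f : β → V | IsCopyMap H G f ∧ ∀ v, π (f v) = σ v}.ncard +
      {f : β → V | ¬ Injective f}.ncard := by
  rw [← Set.ncard_image_of_injective _ (DFunLike.coe_injective (F := H →g G))]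
  refine (Set.ncard_le_ncard ?_ (Set.toFinite _)).trans (Set.ncard_union_le _ _)
  rintro _ ⟨f, hf, rfl⟩
  by_cases hinj : Injective f
  · exact .inl ⟨⟨hinj, fun a b => f.map_adj⟩, mem_colouredHoms.1 hf⟩
  · exact .inr hinj

theorem ncard_setOf_apply_eq_apply_le [Finite β] [Finite V] {x y : β} (hxy : x ≠ y) :
    {f : β → V | f x = f y}.ncard ≤ Nat.card V ^ (Nat.card β - 1) := by
  classical
  have hcard : Nat.card ({w // w ≠ x} → V) = Nat.card V ^ (Nat.card β - 1) := by
    have := Fintype.ofFinite β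
    rw [Nat.card_fun, Nat.card_eq_fintype_card (α := β),
      Nat.card_eq_fintype_card (α := {w // w ≠ x})]
    simp
  rw [← hcard, ← Set.ncard_univ]
  refine Set.ncard_le_ncard_of_injOn (fun f w => f w) (fun _ _ => Set.mem_univ _) ?_
  intro f hf g hg hfg
  ext w
  by_cases hw : w = x
  · rw [hw, show f x = f y from hf, show g x = g y from hg]
    exact congrFun hfg ⟨y, hxy.symm⟩
  · exact congrFun hfg ⟨w, hw⟩

theorem ncard_not_injective_le [Finite β] [Finite V] :
    {f : β → V | ¬ Injective f}.ncard ≤ Nat.card β ^ 2 * Nat.card V ^ (Nat.card β - 1) := by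
  classical
  have := Fintype.ofFinite β
  let P : Finset (β × β) := {p | p.1 ≠ p.2}
  have hunion : {f : β → V | ¬ Injective f} = ⋃ p ∈ P, {f | f p.1 = f p.2} := by
    ext f
    simp [P, not_injective_iff, and_comm]
  calc _ ≤ ∑ p ∈ P, {f : β → V | f p.1 = f p.2}.ncard := hunion ▸ P.set_ncard_biUnion_le _
    _ ≤ ∑ _ ∈ P, Nat.card V ^ (Nat.card β - 1) :=
      sum_le_sum fun _ hp => ncard_setOf_apply_eq_apply_le (mem_filter.1 hp).2
    _ ≤ Nat.card β ^ 2 * Nat.card V ^ (Nat.card β - 1) := by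
      rw [sum_const, smul_eq_mul]
      gcongr
      simpa [sq] using P.card_le_univ

theorem HomAbundant.colouredAbundant [Finite β] [Nonempty β] (h : HomAbundant.{0} σ) :
    ColouredAbundant F H σ := by
  obtain ⟨c, C, hc, hC, hhom⟩ := h
  refine ⟨c / 2, C, by positivity, hC, fun ε hε hε1 => ?_⟩
  have hκ : 0 < c / 2 * ε ^ C := by positivity
  refine ⟨⌈(Nat.card β : ℝ) ^ 2 / (c / 2 * ε ^ C)⌉₊ + 1, fun n hn G π hfar => ?_⟩
  have : NeZero n := ⟨by omega⟩
  obtain ⟨k, hk⟩ := Nat.exists_eq_add_of_le' (Nat.card_pos (α := β))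
  have hhoms := hhom ε hε hε1 (Fin n) G π hfar
  have hsplit := ncard_colouredHoms_le_add σ π
  rw [← Nat.cast_le (α := ℝ), Nat.cast_add] at hsplit
  have hnoninj : ({f : β → Fin n | ¬ Injective f}.ncard : ℝ) ≤ (Nat.card β : ℝ) ^ 2 * n ^ k := by
    have := ncard_not_injective_le (β := β) (V := Fin n)
    rw [Nat.card_fin, hk, Nat.add_sub_cancel, ← hk] at this
    exact_mod_cast this
  have hlarge : (Nat.card β : ℝ) ^ 2 ≤ c / 2 * ε ^ C * n := by
    rw [← div_le_iff₀' hκ]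
    exact (Nat.le_ceil _).trans (Nat.cast_le.2 (by omega))
  have hnoninj' : (Nat.card β : ℝ) ^ 2 * n ^ k ≤ c / 2 * ε ^ C * n ^ (k + 1) := by
    rw [pow_succ' (n : ℝ), ← mul_assoc]
    gcongr
  rw [Nat.card_fin, hk] at hhoms
  rw [hk]
  linarith

theorem ColouredAbundant.homAbundant [Finite α] [Nontrivial α] [Finite β]
    (h : ColouredAbundant F H σ) : HomAbundant.{w} σ := by
  obtain ⟨c, C, hc, hC, habundant⟩ := h
  refine ⟨c, C, hc, hC, fun ε hε hε1 V _ _ G π hfar => ?_⟩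
  obtain ⟨n₀, hn₀⟩ := habundant ε hε hε1
  obtain ⟨p, hp, hprime⟩ := Nat.exists_infinite_primes (max n₀ (Nat.card α))
  have := Fact.mk hprime
  have := Fintype.ofFinite α
  obtain ⟨κ⟩ : Nonempty (α ↪ ZMod p) := Function.Embedding.nonempty_of_card_le <| by
    rw [ZMod.card, ← Nat.card_eq_fintype_card]
    exact (le_max_right _ _).trans hp
  have hcard : Nat.card (V × ZMod p) = Nat.card V * p := by rw [Nat.card_prod, Nat.card_zmod]
  let e := (Finite.equivFinOfCardEq hcard).symm
  have hn : n₀ ≤ Nat.card V * p :=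
    ((le_max_left _ _).trans hp).trans (Nat.le_mul_of_pos_left p Nat.card_pos)
  have hblowup := hn₀ _ hn _ _ (hfar.blowup e κ.injective)
  have hle := (ncard_isCopyMap_le_ncard_colouredHoms σ _).trans (ncard_colouredHoms_blowup_le e σ π)
  rw [Nat.card_zmod] at hle
  have hp0 : (0 : ℝ) < (p : ℝ) ^ Nat.card β := pow_pos (by exact_mod_cast hprime.pos) _
  refine le_of_mul_le_mul_right ?_ hp0
  calc _ = c * ε ^ C * ((Nat.card V * p : ℕ) : ℝ) ^ Nat.card β := by push_cast; ring
    _ ≤ _ := hblowup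
    _ ≤ _ := by exact_mod_cast hle

end HomAbundant

section DependentPairs

variable {ι X : Type*} [Fintype X] [DecidableEq X]

theorem sum_sum_card_inter (A : Finset ι) (D : ι → Finset X) :
    ∑ u ∈ A, ∑ v ∈ A, #(D u ∩ D v) = ∑ x, #{v ∈ A | x ∈ D v} ^ 2 := by
  have hfiber : ∀ x, #{p ∈ A ×ˢ A | x ∈ D p.1 ∧ x ∈ D p.2} = #{v ∈ A | x ∈ D v} ^ 2 :=
    fun x => by rw [sq, ← card_product, ← filter_product]
  have hcount := sum_card_bipartiteAbove_eq_sum_card_bipartiteBelow (s := A ×ˢ A) (t := univ)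
    fun p x => x ∈ D p.1 ∧ x ∈ D p.2
  simp only [bipartiteAbove, bipartiteBelow, hfiber] at hcount
  simpa only [sum_product, ← mem_inter, filter_univ_mem] using hcount

theorem sq_sum_card_le_card_mul_sum_card_inter (A : Finset ι) (D : ι → Finset X) :
    (∑ v ∈ A, #(D v)) ^ 2 ≤ Fintype.card X * ∑ u ∈ A, ∑ v ∈ A, #(D u ∩ D v) := by
  have hcount : ∑ v ∈ A, #(D v) = ∑ x, #{v ∈ A | x ∈ D v} := by
    simpa [bipartiteAbove, bipartiteBelow] using
      sum_card_bipartiteAbove_eq_sum_card_bipartiteBelow (s := A) (t := univ) fun v x => x ∈ D v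
  rw [hcount, sum_sum_card_inter]
  exact sq_sum_le_card_mul_sum_sq

theorem le_card_filter_card_inter [Nonempty X] (A : Finset ι) {D : ι → Finset X} {ρ δ : ℝ}
    (hρ : 0 ≤ ρ) (hδ : 0 ≤ δ) (hD : ∀ v ∈ A, ρ * Fintype.card X ≤ #(D v)) :
    (ρ ^ 2 - δ) * (#A : ℝ) ^ 2 ≤
      #{p ∈ A ×ˢ A | δ * Fintype.card X ≤ (#(D p.1 ∩ D p.2) : ℝ)} := by
  set N : ℝ := (Fintype.card X : ℝ)
  have hN : 0 < N := by simp [N, Fintype.card_pos]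
  set good := {p ∈ A ×ˢ A | δ * N ≤ (#(D p.1 ∩ D p.2) : ℝ)} with hgood
  have hlower : #A * (ρ * N) ≤ ∑ v ∈ A, (#(D v) : ℝ) := by
    simpa [nsmul_eq_mul] using card_nsmul_le_sum A (fun v => (#(D v) : ℝ)) _ hD
  have hupper : ∑ p ∈ A ×ˢ A, (#(D p.1 ∩ D p.2) : ℝ) ≤ #good * N + #A ^ 2 * (δ * N) := by
    have hterm : ∀ p ∈ A ×ˢ A,
        (#(D p.1 ∩ D p.2) : ℝ) ≤ (if δ * N ≤ #(D p.1 ∩ D p.2) then N else 0) + δ * N := by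
      intro p _
      split_ifs with h
      · have : (#(D p.1 ∩ D p.2) : ℝ) ≤ N := Nat.cast_le.2 (card_le_univ _)
        nlinarith
      · linarith
    refine (sum_le_sum hterm).trans_eq ?_
    rw [sum_add_distrib, ← sum_filter, ← hgood]
    simp [sq]
  have hcauchy : (∑ v ∈ A, (#(D v) : ℝ)) ^ 2 ≤ N * ∑ p ∈ A ×ˢ A, (#(D p.1 ∩ D p.2) : ℝ) := by
    simpa [N, sum_product] using
      Nat.cast_le (α := ℝ).2 (sq_sum_card_le_card_mul_sum_card_inter A D)
  have hN2 : 0 < N ^ 2 := by positivity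
  refine le_of_mul_le_mul_left ?_ hN2
  have := (pow_le_pow_left₀ (by positivity) hlower 2).trans
    (hcauchy.trans (mul_le_mul_of_nonneg_left hupper hN.le))
  linarith

end DependentPairs

section MatrixProducts

variable {V R : Type*} [Fintype V] [DecidableEq V] [CommSemiring R]

theorem sum_prod_range_mul (X : ℕ → Matrix V V R) (L : ℕ) (M : Matrix V V R) :
    ∑ x, ∑ y, ((List.range L).map X).prod x y * M x y =
      ∑ f : Fin (L + 1) → V,
        (∏ i : Fin L, X i (f i.castSucc) (f i.succ)) * M (f 0) (f (Fin.last L)) := by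
  induction L generalizing M with
  | zero =>
    rw [← (Equiv.funUnique (Fin 1) V).symm.sum_comp]
    simp [Matrix.one_apply]
  | succ L ih =>
    have hsplit : ∀ x, ∑ z, ((List.range (L + 1)).map X).prod x z * M x z =
        ∑ y, ((List.range L).map X).prod x y * (M * (X L).transpose) x y := by
      intro x
      simp only [List.prod_range_succ, Matrix.mul_apply, Matrix.transpose_apply, sum_mul, mul_sum]
      rw [sum_comm]
      exact sum_congr rfl fun y _ => sum_congr rfl fun z _ => by ring
    simp only [hsplit]
    rw [ih]
    simp only [Matrix.mul_apply, Matrix.transpose_apply, mul_sum]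
    rw [← (Fin.snocEquiv fun _ : Fin (L + 2) => V).sum_comp, Fintype.sum_prod_type_right]
    refine sum_congr rfl fun f _ => sum_congr rfl fun z _ => ?_
    simp only [Fin.snocEquiv, Equiv.coe_fn_mk, Fin.snoc_castSucc, Fin.prod_univ_castSucc,
      Fin.val_castSucc, Fin.succ_castSucc, Fin.val_last, Fin.succ_last, Nat.succ_eq_add_one,
      Fin.snoc_last, Fin.snoc_apply_zero]
    ring

theorem trace_prod_range (X : ℕ → Matrix V V R) (ℓ : ℕ) [NeZero ℓ] :
    ((List.range ℓ).map X).prod.trace = ∑ f : Fin ℓ → V, ∏ i : Fin ℓ, X i (f i) (f (i + 1)) := by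
  obtain ⟨L, rfl⟩ := Nat.exists_eq_succ_of_ne_zero (NeZero.ne ℓ)
  calc _ = ∑ x, ∑ y, ((List.range L).map X).prod x y * (X L).transpose x y := by
        simp [Matrix.trace, List.prod_range_succ, Matrix.mul_apply]
    _ = _ := by
        rw [sum_prod_range_mul]
        simp [Fin.prod_univ_castSucc]

end MatrixProducts

section Walks

variable {α V : Type*} {F : SimpleGraph α} {G : SimpleGraph V}

open Classical in
/-- The adjacency matrix of the edges of `G` directed from the colour class `a` to the colour
class `b`. -/
noncomputable def stepMatrix (π : G →g F) (a b : α) : Matrix V V ℝ :=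
  .of fun x y => if π x = a ∧ π y = b ∧ G.Adj x y then 1 else 0

theorem stepMatrix_nonneg (π : G →g F) (a b : α) (x y : V) : 0 ≤ stepMatrix π a b x y := by
  rw [stepMatrix, Matrix.of_apply]
  positivity

theorem stepMatrix_eq_one {π : G →g F} {a b : α} {x y : V} (hx : π x = a) (hy : π y = b)
    (h : G.Adj x y) : stepMatrix π a b x y = 1 :=
  if_pos ⟨hx, hy, h⟩

variable [Fintype V] [DecidableEq V]

/-- The matrix whose `(x, y)` entry counts the walks `x = v₀, v₁, …, vₖ = y` in `G` such that `vᵢ`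
has colour `q i`. The colours of the endpoints are not constrained for `k = 0`. -/
noncomputable def walkMatrix (π : G →g F) (q : ℕ → α) (k : ℕ) : Matrix V V ℝ :=
  ((List.range k).map fun i => stepMatrix π (q i) (q (i + 1))).prod

variable (π : G →g F) (q : ℕ → α)

theorem walkMatrix_one : walkMatrix π q 1 = stepMatrix π (q 0) (q 1) := by
  simp [walkMatrix]

theorem walkMatrix_succ (k : ℕ) :
    walkMatrix π q (k + 1) = walkMatrix π q k * stepMatrix π (q k) (q (k + 1)) :=
  List.prod_range_succ _ k

theorem walkMatrix_add (s t : ℕ) :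
    walkMatrix π q (s + t) = walkMatrix π q s * walkMatrix π (fun i => q (s + i)) t := by
  simp [walkMatrix, List.range_add, Function.comp_def, add_assoc]

theorem walkMatrix_nonneg (k : ℕ) (x y : V) : 0 ≤ walkMatrix π q k x y := by
  induction k generalizing y with
  | zero =>
    simp only [walkMatrix, List.range_zero, List.map_nil, List.prod_nil, Matrix.one_apply]
    positivity
  | succ k ih =>
    rw [walkMatrix_succ, Matrix.mul_apply]
    exact sum_nonneg fun z _ => mul_nonneg (ih z) (stepMatrix_nonneg π _ _ z y)

theorem trace_walkMatrix (ℓ : ℕ) [NeZero ℓ] (hq : ∀ i : Fin ℓ, q (i + 1) = q (i + 1 : Fin ℓ)) :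
    (walkMatrix π q ℓ).trace =
      {f : Fin ℓ → V | ∀ i, π (f i) = q i ∧ G.Adj (f i) (f (i + 1))}.ncard := by
  classical
  have hprod : ∀ f : Fin ℓ → V, ∏ i : Fin ℓ, stepMatrix π (q i) (q (i + 1)) (f i) (f (i + 1)) =
      if ∀ i, π (f i) = q i ∧ G.Adj (f i) (f (i + 1)) then 1 else 0 := by
    intro f
    simp only [stepMatrix, Matrix.of_apply, prod_ite_zero, prod_const_one, mem_univ, true_imp_iff]
    congr 1
    simp only [hq, eq_iff_iff]
    exact ⟨fun h i => ⟨(h i).1, (h i).2.2⟩, fun h i => ⟨(h i).1, (h (i + 1)).1, (h i).2⟩⟩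
  rw [walkMatrix, trace_prod_range]
  simp only [hprod, sum_boole, ← Set.ncard_coe_finset, coe_filter_univ]

end Walks

section WalksAlongCopies

variable {α V : Type*} {F : SimpleGraph α} {G : SimpleGraph V}
  {π : G →g F} {𝒞 : Finset (F →g G)}

/-- The vertices of colour `b` on the copies through `v`. -/
def copyNeighbors [DecidableEq V] (π : G →g F) (𝒞 : Finset (F →g G)) (b : α) (v : V) :
    Finset V :=
  {f ∈ 𝒞 | f (π v) = v}.image (· b)

theorem card_copyNeighbors [DecidableEq V] (h𝒞 : IsCopyPacking π (𝒞 : Set (F →g G))) {b : α}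
    {v : V} (hb : F.Adj (π v) b) : #(copyNeighbors π 𝒞 b v) = #{f ∈ 𝒞 | f (π v) = v} := by
  refine card_image_of_injOn fun f hf g hg hfg => ?_
  obtain ⟨hf, hfv⟩ := mem_filter.1 hf
  obtain ⟨hg, hgv⟩ := mem_filter.1 hg
  exact h𝒞.eq_of_adj f hf g hg _ _ hb (hfv.trans hgv.symm) hfg

variable [Fintype V]

theorem le_card_filter_color_eq [DecidableEq α] [DecidableEq V] [Nonempty V]
    (h𝒞 : IsCopyPacking π (𝒞 : Set (F →g G))) {r : ℝ} (hr : 0 < r)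
    (hdeg : ∀ v, r ≤ #{f ∈ 𝒞 | f (π v) = v}) {a b : α} (hab : F.Adj a b) : r ≤ #{v | π v = a} := by
  obtain ⟨v₀⟩ := ‹Nonempty V›
  obtain ⟨f, hf⟩ : {f ∈ 𝒞 | f (π v₀) = v₀}.Nonempty :=
    card_pos.1 (by exact_mod_cast hr.trans_le (hdeg v₀))
  have hf𝒞 : f ∈ 𝒞 := (mem_filter.1 hf).1
  have hcolor : π (f b) = b := h𝒞.apply_apply f hf𝒞 b
  refine (hdeg (f b)).trans ?_
  rw [← card_copyNeighbors h𝒞 (b := a) (by rw [hcolor]; exact hab.symm)]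
  refine Nat.cast_le.2 (card_le_card fun x hx => ?_)
  obtain ⟨g, hg, rfl⟩ := mem_image.1 hx
  exact mem_filter.2 ⟨mem_univ _, h𝒞.apply_apply g (mem_filter.1 hg).1 a⟩

theorem card_mul_le_vecMul_stepMatrix (h𝒞 : IsCopyPacking π (𝒞 : Set (F →g G))) {a b : α}
    (hab : F.Adj a b) {w : V → ℝ} (hw : ∀ x, 0 ≤ w x) {θ : ℝ} {S : Finset (F →g G)} {y : V}
    (hS : ∀ f ∈ S, f ∈ 𝒞 ∧ f b = y ∧ θ ≤ w (f a)) :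
    #S * θ ≤ Matrix.vecMul w (stepMatrix π a b) y := by
  classical
  have hinj : Set.InjOn (fun f : F →g G => f a) S := fun f hf g hg hfg =>
    h𝒞.eq_of_adj f (hS f hf).1 g (hS g hg).1 a b hab hfg ((hS f hf).2.1.trans (hS g hg).2.1.symm)
  calc #S * θ ≤ ∑ f ∈ S, w (f a) * stepMatrix π a b (f a) y := by
        rw [← nsmul_eq_mul]
        refine card_nsmul_le_sum _ _ _ fun f hf => ?_
        obtain ⟨hf𝒞, rfl, hθw⟩ := hS f hf
        rwa [stepMatrix_eq_one (h𝒞.apply_apply f hf𝒞 a) (h𝒞.apply_apply f hf𝒞 b)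
          (f.map_adj hab), mul_one]
    _ = ∑ x ∈ S.image (· a), w x * stepMatrix π a b x y :=
        (sum_image (f := fun x => w x * stepMatrix π a b x y) hinj).symm
    _ ≤ Matrix.vecMul w (stepMatrix π a b) y :=
        sum_le_univ_sum_of_nonneg fun x => mul_nonneg (hw x) (stepMatrix_nonneg π a b x y)

-- A copy is lost if extending walks of total weight at least `θ` at its vertex of colour `a` along
-- its edge to colour `b` does not collect weight `θ * τ` there. As the copies are edge-disjoint,
-- those ending at the same vertex all contribute, so fewer than `τ` of them can be lost.
theorem card_filter_vecMul_lt_le (h𝒞 : IsCopyPacking π (𝒞 : Set (F →g G))) {a b : α}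
    (hab : F.Adj a b) {w : V → ℝ} (hw : ∀ x, 0 ≤ w x) {θ τ : ℝ} (hθ : 0 < θ) (hτ : 0 ≤ τ) :
    (#{f ∈ 𝒞 | θ ≤ w (f a) ∧ Matrix.vecMul w (stepMatrix π a b) (f b) < θ * τ} : ℝ) ≤
      Fintype.card V * τ := by
  classical
  set lost := {f ∈ 𝒞 | θ ≤ w (f a) ∧ Matrix.vecMul w (stepMatrix π a b) (f b) < θ * τ} with hlost
  have hfiber : ∀ y, (#{f ∈ lost | f b = y} : ℝ) ≤ τ := by
    intro y
    obtain hempty | ⟨f₀, hf₀⟩ := {f ∈ lost | f b = y}.eq_empty_or_nonempty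
    · simpa [hempty] using hτ
    have hle : #{f ∈ lost | f b = y} * θ ≤ Matrix.vecMul w (stepMatrix π a b) y :=
      card_mul_le_vecMul_stepMatrix h𝒞 hab hw fun f hf => by
        simp only [hlost, mem_filter] at hf
        exact ⟨hf.1.1, hf.2, hf.1.2.1⟩
    have hlt : Matrix.vecMul w (stepMatrix π a b) y < θ * τ := by
      simp only [hlost, mem_filter] at hf₀
      exact hf₀.2 ▸ hf₀.1.2.2
    exact le_of_mul_le_mul_left (by linarith) hθ
  calc (#lost : ℝ) = ∑ y, (#{f ∈ lost | f b = y} : ℝ) := by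
        exact_mod_cast card_eq_sum_card_fiberwise (f := fun f : F →g G => f b) (t := univ)
          fun f _ => mem_univ _
    _ ≤ ∑ _y : V, τ := sum_le_sum fun y _ => hfiber y
    _ = Fintype.card V * τ := by simp

variable {q : ℕ → α}

theorem card_filter_walkMatrix_lt_le [DecidableEq V] [DecidableRel G.Adj]
    (h𝒞 : IsCopyPacking π (𝒞 : Set (F →g G))) (hq : ∀ i, F.Adj (q i) (q (i + 1)))
    {τ : ℝ} (hτ : 0 < τ) {v : V} (hv : π v = q 0) (k : ℕ) :
    (#{f ∈ 𝒞 | G.Adj v (f (q 1)) ∧ walkMatrix π q (k + 1) v (f (q (k + 1))) < τ ^ k} : ℝ) ≤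
      k * (Fintype.card V * τ) := by
  classical
  induction k with
  | zero =>
    rw [filter_false_of_mem]
    · simp
    · rintro f hf ⟨hadj, hlt⟩
      rw [zero_add, walkMatrix_one, stepMatrix_eq_one hv (h𝒞.apply_apply f hf _) hadj] at hlt
      simp at hlt
  | succ k ih =>
    have hstep := card_filter_vecMul_lt_le h𝒞 (hq (k + 1)) (walkMatrix_nonneg π q (k + 1) v)
      (pow_pos hτ k) hτ.le
    have hvecMul : ∀ y, walkMatrix π q (k + 1 + 1) v y =
        Matrix.vecMul (walkMatrix π q (k + 1) v) (stepMatrix π (q (k + 1)) (q (k + 1 + 1))) y :=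
      fun y => by rw [walkMatrix_succ]; rfl
    have hsub : {f ∈ 𝒞 | G.Adj v (f (q 1)) ∧
          walkMatrix π q (k + 1 + 1) v (f (q (k + 1 + 1))) < τ ^ (k + 1)} ⊆
        {f ∈ 𝒞 | G.Adj v (f (q 1)) ∧ walkMatrix π q (k + 1) v (f (q (k + 1))) < τ ^ k} ∪
          {f ∈ 𝒞 | τ ^ k ≤ walkMatrix π q (k + 1) v (f (q (k + 1))) ∧
            Matrix.vecMul (walkMatrix π q (k + 1) v) (stepMatrix π (q (k + 1)) (q (k + 1 + 1)))
              (f (q (k + 1 + 1))) < τ ^ k * τ} := by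
      intro f
      simp only [mem_union, mem_filter, hvecMul, pow_succ]
      grind
    have hcard := Nat.cast_le (α := ℝ).2 ((card_le_card hsub).trans (card_union_le _ _))
    push_cast at hcard ⊢
    linarith

end WalksAlongCopies

section ClosedWalks

variable {α V : Type*} {F : SimpleGraph α} {G : SimpleGraph V} [Fintype V]
  [DecidableEq V] {π : G →g F} {𝒞 : Finset (F →g G)} {q : ℕ → α}

/-- The pairs of vertices of colour `q 0` that have at least `δ` common neighbours of colour `q 1`
along copies in `𝒞`, but are joined by fewer than `τ ^ k` walks with colours `q 0, …, q (k + 1)`. -/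
noncomputable def poorPairs [DecidableEq α] (π : G →g F) (𝒞 : Finset (F →g G)) (q : ℕ → α) (k : ℕ)
    (δ τ : ℝ) : Finset (V × V) :=
  {p | (π p.1 = q 0 ∧ π p.2 = q 0) ∧
    δ ≤ #(copyNeighbors π 𝒞 (q 1) p.1 ∩ copyNeighbors π 𝒞 (q 1) p.2) ∧
    walkMatrix π q (k + 1) p.1 p.2 < τ ^ k}

theorem mem_poorPairs [DecidableEq α] {k : ℕ} {δ τ : ℝ} {v u : V} :
    (v, u) ∈ poorPairs π 𝒞 q k δ τ ↔ (π v = q 0 ∧ π u = q 0) ∧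
      δ ≤ #(copyNeighbors π 𝒞 (q 1) v ∩ copyNeighbors π 𝒞 (q 1) u) ∧
      walkMatrix π q (k + 1) v u < τ ^ k := by
  simp [poorPairs]

theorem card_filter_mem_poorPairs_mul_le [DecidableEq α]
    (h𝒞 : IsCopyPacking π (𝒞 : Set (F →g G))) (hq : ∀ i, F.Adj (q i) (q (i + 1)))
    {k : ℕ} (hk : q (k + 1) = q 0) {δ τ : ℝ} (hτ : 0 < τ) (v : V) :
    #{u | (v, u) ∈ poorPairs π 𝒞 q k δ τ} * δ ≤ k * (Fintype.card V * τ) := by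
  set S : Finset V := {u | (v, u) ∈ poorPairs π 𝒞 q k δ τ}
  obtain hempty | ⟨u₀, hu₀⟩ := S.eq_empty_or_nonempty
  · simp only [hempty, card_empty, Nat.cast_zero, zero_mul]
    positivity
  classical
  set lost := {f ∈ 𝒞 | G.Adj v (f (q 1)) ∧ walkMatrix π q (k + 1) v (f (q (k + 1))) < τ ^ k}
  have hfiber : ∀ u ∈ S, δ ≤ #{f ∈ lost | f (q 0) = u} := by
    intro u hu
    obtain ⟨⟨hv, hu⟩, hδ, hlt⟩ := mem_poorPairs.1 (mem_filter.1 hu).2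
    refine hδ.trans (Nat.cast_le.2 ((card_le_card fun x hx => ?_).trans
      (card_image_le (f := fun f : F →g G => f (q 1)))))
    simp only [copyNeighbors, mem_inter, mem_image, mem_filter, hv, hu] at hx
    obtain ⟨⟨g, ⟨-, hgv⟩, hgx⟩, f, ⟨hf, hfu⟩, rfl⟩ := hx
    have hadj : G.Adj v (f (q 1)) := hgv ▸ hgx ▸ g.map_adj (hq 0)
    refine mem_image_of_mem _ (mem_filter.2 ⟨mem_filter.2 ⟨hf, hadj, ?_⟩, hfu⟩)
    rwa [hk, hfu]
  calc #S * δ ≤ ∑ u ∈ S, (#{f ∈ lost | f (q 0) = u} : ℝ) := by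
        simpa [nsmul_eq_mul] using card_nsmul_le_sum S _ δ hfiber
    _ ≤ #lost := by
        rw [← Nat.cast_sum, sum_card_fiberwise_eq_card_filter lost S fun f => f (q 0)]
        exact Nat.cast_le.2 (card_filter_le _ _)
    _ ≤ k * (Fintype.card V * τ) :=
        card_filter_walkMatrix_lt_le h𝒞 hq hτ (mem_poorPairs.1 (mem_filter.1 hu₀).2).1.1 k

theorem card_poorPairs_mul_le [DecidableEq α]
    (h𝒞 : IsCopyPacking π (𝒞 : Set (F →g G))) (hq : ∀ i, F.Adj (q i) (q (i + 1)))
    {k : ℕ} (hk : q (k + 1) = q 0) {δ τ : ℝ} (hτ : 0 < τ) :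
    #(poorPairs π 𝒞 q k δ τ) * δ ≤ Fintype.card V * (k * (Fintype.card V * τ)) := by
  have hcard : #(poorPairs π 𝒞 q k δ τ) = ∑ v, #{u | (v, u) ∈ poorPairs π 𝒞 q k δ τ} := by
    conv_lhs => rw [← filter_univ_mem (poorPairs π 𝒞 q k δ τ)]
    simp only [card_filter, Fintype.sum_prod_type]
  rw [hcard, Nat.cast_sum, sum_mul]
  simpa [nsmul_eq_mul] using
    sum_le_sum fun v (_ : v ∈ univ) => card_filter_mem_poorPairs_mul_le h𝒞 hq hk hτ v

variable [Nonempty V] {ε : ℝ}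

theorem le_card_filter_card_inter_copyNeighbors [DecidableEq α]
    (h𝒞 : IsCopyPacking π (𝒞 : Set (F →g G))) (hε : 0 < ε)
    (hdeg : ∀ v, ε * Fintype.card V ≤ #{f ∈ 𝒞 | f (π v) = v}) {a b b' : α}
    (hb : F.Adj a b) (hb' : F.Adj a b') :
    ε ^ 6 / 2 * Fintype.card V ^ 2 ≤ #{p : V × V | (π p.1 = a ∧ π p.2 = a) ∧
      ε ^ 4 / 2 * Fintype.card V ≤
        (#(copyNeighbors π 𝒞 b p.1 ∩ copyNeighbors π 𝒞 b p.2) : ℝ) ∧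
      ε ^ 4 / 2 * Fintype.card V ≤
        (#(copyNeighbors π 𝒞 b' p.1 ∩ copyNeighbors π 𝒞 b' p.2) : ℝ)} := by
  set N : ℝ := (Fintype.card V : ℝ) with hN
  have hN0 : 0 < N := by simp [N, Fintype.card_pos]
  have hcolor : ε * N ≤ #{v | π v = a} :=
    le_card_filter_color_eq h𝒞 (mul_pos hε hN0) hdeg hb
  have hdegree : ∀ {v d}, π v = a → F.Adj a d → ε * N ≤ #(copyNeighbors π 𝒞 d v) := by
    rintro v d rfl hd
    rw [card_copyNeighbors h𝒞 hd]
    exact hdeg v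
  have hprod : ∀ v ∈ ({v | π v = a} : Finset V), ε ^ 2 * Fintype.card (V × V) ≤
      #(copyNeighbors π 𝒞 b v ×ˢ copyNeighbors π 𝒞 b' v) := by
    intro v hv
    have hv : π v = a := (mem_filter.1 hv).2
    rw [Fintype.card_prod, card_product]
    push_cast
    nlinarith [mul_le_mul (hdegree hv hb) (hdegree hv hb') (by positivity) (by positivity)]
  have hpairs := le_card_filter_card_inter _ (by positivity) (show 0 ≤ ε ^ 4 / 2 by positivity)
    hprod
  calc ε ^ 6 / 2 * N ^ 2 = ((ε ^ 2) ^ 2 - ε ^ 4 / 2) * (ε * N) ^ 2 := by ring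
    _ ≤ ((ε ^ 2) ^ 2 - ε ^ 4 / 2) * (#{v | π v = a} : ℝ) ^ 2 := by
        have : 0 ≤ (ε ^ 2) ^ 2 - ε ^ 4 / 2 := by nlinarith [pow_pos hε 4]
        gcongr
    _ ≤ _ := hpairs
    _ ≤ _ := Nat.cast_le.2 (card_le_card fun p hp => ?_)
  simp only [mem_filter, mem_product, product_inter_product, card_product, mem_univ, true_and,
    Fintype.card_prod, Nat.cast_mul, ← hN] at hp ⊢
  obtain ⟨hp, hδ⟩ := hp
  have card_le : ∀ S : Finset V, (#S : ℝ) ≤ N := fun S => Nat.cast_le.2 S.card_le_univ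
  refine ⟨hp, le_of_mul_le_mul_right ?_ hN0, le_of_mul_le_mul_right ?_ hN0⟩
  · rw [mul_assoc]
    exact hδ.trans (by gcongr; exact card_le _)
  · rw [mul_assoc]
    exact hδ.trans (by rw [mul_comm]; gcongr; exact card_le _)

theorem card_poorPairs_add_card_poorPairs_le [DecidableEq α]
    (h𝒞 : IsCopyPacking π (𝒞 : Set (F →g G))) (hε : 0 < ε) {q' : ℕ → α}
    (hq : ∀ i, F.Adj (q i) (q (i + 1))) (hq' : ∀ i, F.Adj (q' i) (q' (i + 1)))
    {s t : ℕ} (hs : q (s + 1) = q 0) (ht : q' (t + 1) = q' 0) {τ : ℝ} (hτ : 0 < τ)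
    (hτε : 8 * (s + t) * τ ≤ ε ^ 10 * Fintype.card V) :
    (#(poorPairs π 𝒞 q s (ε ^ 4 / 2 * Fintype.card V) τ) +
      #(poorPairs π 𝒞 q' t (ε ^ 4 / 2 * Fintype.card V) τ) : ℝ) ≤
        ε ^ 6 / 4 * Fintype.card V ^ 2 := by
  set N : ℝ := (Fintype.card V : ℝ) with hN
  have : 0 < N := by simp [N, Fintype.card_pos]
  have hpoor := card_poorPairs_mul_le h𝒞 hq hs (δ := ε ^ 4 / 2 * N) hτ
  have hpoor' := card_poorPairs_mul_le h𝒞 hq' ht (δ := ε ^ 4 / 2 * N) hτ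
  rw [← hN] at hpoor hpoor'
  have := mul_le_mul_of_nonneg_left hτε (show 0 ≤ N ^ 2 by positivity)
  refine le_of_mul_le_mul_right ?_ (show 0 < ε ^ 4 / 2 * N by positivity)
  nlinarith

theorem le_card_filter_walkMatrix (h𝒞 : IsCopyPacking π (𝒞 : Set (F →g G))) (hε : 0 < ε)
    (hdeg : ∀ v, ε * Fintype.card V ≤ #{f ∈ 𝒞 | f (π v) = v}) {q' : ℕ → α}
    (hq : ∀ i, F.Adj (q i) (q (i + 1))) (hq' : ∀ i, F.Adj (q' i) (q' (i + 1))) (h0 : q' 0 = q 0)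
    {s t : ℕ} (hs : q (s + 1) = q 0) (ht : q' (t + 1) = q' 0) {τ : ℝ} (hτ : 0 < τ)
    (hτε : 8 * (s + t) * τ ≤ ε ^ 10 * Fintype.card V) :
    ε ^ 6 / 4 * Fintype.card V ^ 2 ≤ #{p : V × V |
      τ ^ s ≤ walkMatrix π q (s + 1) p.1 p.2 ∧ τ ^ t ≤ walkMatrix π q' (t + 1) p.2 p.1} := by
  classical
  set δ : ℝ := ε ^ 4 / 2 * Fintype.card V
  have hrich := le_card_filter_card_inter_copyNeighbors h𝒞 hε hdeg (hq 0) (h0 ▸ hq' 0)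
  set connected : Finset (V × V) := {p |
    τ ^ s ≤ walkMatrix π q (s + 1) p.1 p.2 ∧ τ ^ t ≤ walkMatrix π q' (t + 1) p.2 p.1}
    with hconnected
  have hsub := card_le_card (s := {p : V × V | (π p.1 = q 0 ∧ π p.2 = q 0) ∧
      δ ≤ (#(copyNeighbors π 𝒞 (q 1) p.1 ∩ copyNeighbors π 𝒞 (q 1) p.2) : ℝ) ∧
      δ ≤ (#(copyNeighbors π 𝒞 (q' 1) p.1 ∩ copyNeighbors π 𝒞 (q' 1) p.2) : ℝ)})
    (t := connected ∪
      (poorPairs π 𝒞 q s δ τ ∪ (poorPairs π 𝒞 q' t δ τ).map (Equiv.prodComm V V).toEmbedding))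
    (by
      rintro ⟨v, u⟩ h
      simp only [mem_union, mem_map_equiv, Equiv.prodComm_symm, Equiv.prodComm_apply,
        Prod.swap_prod_mk, mem_poorPairs, hconnected, mem_filter, mem_univ, true_and, h0,
        inter_comm (copyNeighbors π 𝒞 (q' 1) u)] at h ⊢
      grind)
  replace hsub := Nat.cast_le (α := ℝ).2
    (hsub.trans ((card_union_le _ _).trans (Nat.add_le_add_left (card_union_le _ _) _)))
  rw [card_map] at hsub
  push_cast at hsub
  have hpoor := card_poorPairs_add_card_poorPairs_le h𝒞 hε hq hq' hs ht hτ hτε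
  linarith

theorem le_trace_walkMatrix (h𝒞 : IsCopyPacking π (𝒞 : Set (F →g G))) (hε : 0 < ε)
    (hdeg : ∀ v, ε * Fintype.card V ≤ #{f ∈ 𝒞 | f (π v) = v})
    (hq : ∀ i, F.Adj (q i) (q (i + 1))) {s t : ℕ} (hs : q (s + 1) = q 0)
    (ht : q (s + 1 + (t + 1)) = q 0) :
    ε ^ 6 / 4 * (ε ^ 10 / (8 * (s + t + 1))) ^ (s + t) * Fintype.card V ^ (s + t + 2) ≤
      (walkMatrix π q (s + 1 + (t + 1))).trace := by
  set N : ℝ := (Fintype.card V : ℝ)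
  have hN0 : 0 < N := by simp [N, Fintype.card_pos]
  set q' : ℕ → α := fun i => q (s + 1 + i)
  set τ : ℝ := ε ^ 10 / (8 * (s + t + 1)) * N with hτdef
  have hτ : 0 < τ := by positivity
  have hτε : 8 * (s + t) * τ ≤ ε ^ 10 * N := by
    have : ε ^ 10 * N = 8 * (s + t + 1) * τ := by rw [hτdef]; field_simp
    rw [this]
    exact mul_le_mul_of_nonneg_right (by linarith) hτ.le
  have hpairs := le_card_filter_walkMatrix h𝒞 hε hdeg hq (q' := q') (fun i => hq (s + 1 + i)) hs hs
    (ht.trans hs.symm) hτ hτε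
  set connected : Finset (V × V) := {p |
    τ ^ s ≤ walkMatrix π q (s + 1) p.1 p.2 ∧ τ ^ t ≤ walkMatrix π q' (t + 1) p.2 p.1}
  calc _ = ε ^ 6 / 4 * N ^ 2 * (τ ^ s * τ ^ t) := by rw [hτdef]; ring
    _ ≤ #connected * (τ ^ s * τ ^ t) := by gcongr
    _ ≤ ∑ p ∈ connected, walkMatrix π q (s + 1) p.1 p.2 * walkMatrix π q' (t + 1) p.2 p.1 := by
      rw [← nsmul_eq_mul]
      refine card_nsmul_le_sum _ _ _ fun p hp => ?_
      obtain ⟨-, hp⟩ := mem_filter.1 hp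
      exact mul_le_mul hp.1 hp.2 (by positivity) (walkMatrix_nonneg ..)
    _ ≤ ∑ p : V × V, walkMatrix π q (s + 1) p.1 p.2 * walkMatrix π q' (t + 1) p.2 p.1 :=
      sum_le_univ_sum_of_nonneg fun p =>
        mul_nonneg (walkMatrix_nonneg ..) (walkMatrix_nonneg ..)
    _ = (walkMatrix π q (s + 1 + (t + 1))).trace := by
      rw [walkMatrix_add π q (s + 1) (t + 1), Matrix.trace, Fintype.sum_prod_type]
      simp only [Matrix.diag_apply, Matrix.mul_apply, q']

end ClosedWalks

section FoldedCycles

open scoped Fin.NatCast Fin.CommRing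

universe w

variable {α V : Type*} {F : SimpleGraph α} {G : SimpleGraph V} {ℓ : ℕ} [NeZero ℓ]

theorem trace_walkMatrix_le_ncard_colouredHoms [Fintype V] [DecidableEq V]
    (σ : cycleGraph ℓ →g F) (π : G →g F) (i : Fin ℓ) :
    (walkMatrix π (fun k => σ (i + k)) ℓ).trace ≤ ((colouredHoms σ π).ncard : ℝ) := by
  rw [trace_walkMatrix _ _ _ fun k => by simp,
    ← Set.ncard_image_of_injective _ (DFunLike.coe_injective (F := cycleGraph ℓ →g G)),
    ← Set.ncard_image_of_injective _ (Equiv.subRight i).surjective.injective_comp_right,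
    Nat.cast_le]
  refine Set.ncard_le_ncard ?_ (Set.toFinite _)
  rintro _ ⟨f, hf, rfl⟩
  have hadj : ∀ k, G.Adj (f (k - i)) (f (k + 1 - i)) := fun k => by
    simpa only [sub_add_eq_add_sub] using (hf (k - i)).2
  refine ⟨⟨f ∘ Equiv.subRight i, fun {k l} hkl => ?_⟩, mem_colouredHoms.2 fun k => ?_, rfl⟩
  · obtain rfl | rfl := eq_add_one_or_eq_add_one_of_cycleGraph_adj hkl
    · exact hadj k
    · exact (hadj l).symm
  · simpa using (hf (k - i)).1

theorem exists_apply_add_natCast_eq_of_not_injective {σ : Fin ℓ → α} (hσ : ¬ Injective σ) :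
    ∃ (i : Fin ℓ) (s t : ℕ), ℓ = s + 1 + (t + 1) ∧ σ (i + (s + 1 : ℕ)) = σ i := by
  obtain ⟨i, j, hij, hne⟩ := not_injective_iff.1 hσ
  wlog hlt : i < j generalizing i j
  · exact this j i hij.symm hne.symm (hne.lt_or_gt.resolve_left hlt)
  obtain ⟨s, hs⟩ := Nat.exists_eq_add_of_lt (Fin.lt_def.1 hlt)
  obtain ⟨t, ht⟩ := Nat.exists_eq_add_of_lt (show s + 1 < ℓ by omega)
  refine ⟨i, s, t, ht, ?_⟩
  have hj : i + (s + 1 : ℕ) = j := by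
    rw [← Fin.cast_val_eq_self j, hs, add_assoc, Nat.cast_add i.val, Fin.cast_val_eq_self]
  rw [hj, hij]

theorem homAbundant_of_not_injective [Finite α] {σ : cycleGraph ℓ →g F} (hσ : ¬ Injective σ) :
    HomAbundant.{w} σ := by
  classical
  obtain ⟨i, s, t, hst, hs⟩ := exists_apply_add_natCast_eq_of_not_injective hσ
  refine ⟨1 / 4 * (1 / (8 * (s + t + 1))) ^ (s + t), (6 + 10 * (s + t) : ℕ), by positivity,
    by positivity, fun ε hε _ V _ _ G π hfar => ?_⟩
  have := Fintype.ofFinite V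
  obtain ⟨𝒞, h𝒞, hdeg⟩ := hfar.exists_isCopyPacking
  have : Finite (F →g G) := .of_injective _ DFunLike.coe_injective
  lift 𝒞 to Finset (F →g G) using 𝒞.toFinite
  replace hdeg : ∀ v, ε * Fintype.card V ≤ #{f ∈ 𝒞 | f (π v) = v} := fun v => by
    rw [← Nat.card_eq_fintype_card, ← Set.ncard_coe_finset]
    simpa using hdeg v
  have hadj : ∀ k : ℕ, F.Adj (σ (i + k)) (σ (i + (k + 1 : ℕ))) := fun k => by
    rw [Nat.cast_add, ← add_assoc, Nat.cast_one]
    exact σ.map_adj (cycleGraph_adj_add_one (by omega) _)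
  have htrace := le_trace_walkMatrix h𝒞 hε hdeg (q := fun k : ℕ => σ (i + k)) hadj
    (s := s) (t := t) (by simpa using hs) (by simp [← hst])
  rw [← hst] at htrace
  refine le_trans (le_of_eq ?_) (htrace.trans (trace_walkMatrix_le_ncard_colouredHoms σ π i))
  rw [Nat.card_fin, Nat.card_eq_fintype_card, show s + t + 2 = ℓ by omega, Real.rpow_natCast]
  ring

end FoldedCycles

section ConvexSolutions

theorem eq_of_sum_smul_eq_zero_of_dotProduct_self_eq {ι n R : Type*} [Fintype ι] [Fintype n]
    [CommRing R] [LinearOrder R] [IsStrictOrderedRing R] {a : ι → R} {i₀ : ι}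
    (ha : ∀ i, i ≠ i₀ → 0 < a i) (hsum : ∑ i, a i = 0) {x : ι → n → R}
    (hx : ∀ i, x i ⬝ᵥ x i = x i₀ ⬝ᵥ x i₀) (hax : ∑ i, a i • x i = 0) (i : ι) : x i = x i₀ := by
  have hzero : ∑ i, a i * ((x i - x i₀) ⬝ᵥ (x i - x i₀)) = 0 := by
    calc _ = ∑ i, (a i * (2 * (x i₀ ⬝ᵥ x i₀)) - 2 * ((a i • x i) ⬝ᵥ x i₀)) :=
          sum_congr rfl fun i _ => by
            rw [sub_dotProduct, dotProduct_sub, dotProduct_sub, hx i, smul_dotProduct,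
              dotProduct_comm (x i₀) (x i), smul_eq_mul]
            ring
      _ = 0 := by rw [sum_sub_distrib, ← sum_mul, ← mul_sum, ← sum_dotProduct, hsum, hax]; simp
  have hnonneg : ∀ i ∈ univ, 0 ≤ a i * ((x i - x i₀) ⬝ᵥ (x i - x i₀)) := by
    intro i _
    obtain rfl | hi := eq_or_ne i i₀
    · simp
    · exact mul_nonneg (ha i hi).le (sum_nonneg fun _ _ => mul_self_nonneg _)
  obtain rfl | hi := eq_or_ne i i₀
  · rfl
  have hterm := (sum_eq_zero_iff_of_nonneg hnonneg).1 hzero i (mem_univ i)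
  exact sub_eq_zero.1 (dotProduct_self_eq_zero.1 ((mul_eq_zero.1 hterm).resolve_left (ha i hi).ne'))

/-- The set `S` contains no nontrivial solutions to convex equations whose coefficients sum to `0`
and have absolute values adding up to at most `N`. -/
def IsConvexSolutionFree {A : Type*} [AddCommGroup A] (N : ℕ) (S : Set A) : Prop :=
  ∀ ⦃ℓ : ℕ⦄ ⦃a : Fin ℓ → ℤ⦄, IsConvexEquation a → (∀ i, a i ≠ 0) → ∑ i, a i = 0 →
    ∑ i, |a i| ≤ N → ∀ ⦃s : Fin ℓ → A⦄, (∀ i, s i ∈ S) → ∑ i, a i • s i = 0 → ∀ i j, s i = s j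

theorem IsConvexSolutionFree.eq_of_smul_eq {A : Type*} [AddCommGroup A] {N : ℕ} {S : Set A}
    (hS : IsConvexSolutionFree N S) {s s' : A} (hs : s ∈ S) (hs' : s' ∈ S) {d : ℤ} (hd : d ≠ 0)
    (hdN : 2 * |d| ≤ N) (h : d • s = d • s') : s = s' := by
  wlog hpos : 0 < d generalizing d
  · exact this (neg_ne_zero.2 hd) (by rwa [abs_neg]) (by rw [neg_smul, neg_smul, h]) (by omega)
  refine hS (a := ![d, -d]) (s := ![s, s']) ⟨1, ?_, ?_⟩ ?_ ?_ ?_ ?_ ?_ 0 1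
  · simpa
  · simp [Fin.forall_fin_two, hpos.le]
  · simp [Fin.forall_fin_two, hd]
  · simp
  · simpa [two_mul] using hdN
  · simp [Fin.forall_fin_two, hs, hs']
  · simp [h]

theorem isConvexSolutionFree_image_sphere {N r m : ℕ} (hm : N * r ≤ m) (n k : ℕ) :
    IsConvexSolutionFree N
      ((fun (x : Fin n → ℕ) t => (x t : ZMod m)) '' (Behrend.sphere n r k : Set (Fin n → ℕ))) := by
  rintro ℓ a ⟨i₀, -, ha⟩ ha0 hsum haN s hs has
  choose x hx hxs using hs
  have hbox : ∀ i t, x i t < r := fun i => Behrend.mem_box.1 (mem_filter.1 (hx i)).1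
  have heq : ∑ i, a i • (fun t => (x i t : ℤ)) = 0 := by
    ext t
    have hmod : ((∑ i, a i * x i t : ℤ) : ZMod m) = 0 := by
      have := congrFun has t
      simpa [← hxs, zsmul_eq_mul] using this
    have hlt : |∑ i, a i * (x i t : ℤ)| < m := calc
      _ ≤ ∑ i, |a i * (x i t : ℤ)| := abs_sum_le_sum_abs _ _
      _ < ∑ i, |a i| * r := sum_lt_sum_of_nonempty ⟨i₀, mem_univ _⟩ fun i _ => by
        rw [abs_mul, Nat.abs_cast]
        exact mul_lt_mul_of_pos_left (by exact_mod_cast hbox i t) (abs_pos.2 (ha0 i))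
      _ ≤ N * r := by rw [← sum_mul]; gcongr
      _ ≤ m := by exact_mod_cast hm
    simpa using Int.eq_zero_of_abs_lt_dvd ((ZMod.intCast_zmod_eq_zero_iff_dvd _ m).1 hmod) hlt
  have hxi₀ : ∀ i, (fun t => (x i t : ℤ)) = fun t => (x i₀ t : ℤ) :=
    eq_of_sum_smul_eq_zero_of_dotProduct_self_eq (fun i hi => (ha i hi).lt_of_ne' (ha0 i)) hsum
      (fun i => by
        have : ∀ i, ∑ t, x i t ^ 2 = k := fun i => (mem_filter.1 (hx i)).2
        simp only [dotProduct, ← sq]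
        exact_mod_cast (this i).trans (this i₀).symm) heq
  have hxx : ∀ i, s i = s i₀ := fun i => by
    ext t
    have := congrFun (hxi₀ i) t
    simp only [← hxs, Nat.cast_inj.1 this]
  exact fun i j => (hxx i).trans (hxx j).symm

theorem card_image_natCast_sphere {r m : ℕ} (hrm : r ≤ m) (n k : ℕ) :
    #((Behrend.sphere n r k).image fun x t => (x t : ZMod m)) = #(Behrend.sphere n r k) := by
  refine card_image_of_injOn fun x hx y hy hxy => ?_
  ext t
  have hlt : ∀ z ∈ Behrend.sphere n r k, z t < m := fun z hz =>
    (Behrend.mem_box.1 (Behrend.sphere_subset_box hz) t).trans_le hrm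
  exact Nat.ModEq.eq_of_lt_of_lt ((ZMod.natCast_eq_natCast_iff _ _ _).1 (congrFun hxy t))
    (hlt x hx) (hlt y hy)

theorem exists_mul_pow_lt_pow {N : ℕ} (hN : 2 ≤ N) (B : ℝ) (C : ℕ) :
    ∃ n : ℕ, n ≠ 0 ∧ B * (n : ℝ) ^ C < (N : ℝ) ^ n := by
  have hN1 : (1 : ℝ) < N := by exact_mod_cast hN
  have hlim := (tendsto_pow_const_div_const_pow_of_one_lt C hN1).const_mul B
  rw [mul_zero] at hlim
  obtain ⟨n, hn, hn0⟩ :=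
    ((hlim.eventually (gt_mem_nhds one_pos)).and (Filter.eventually_ne_atTop 0)).exists
  refine ⟨n, hn0, ?_⟩
  rwa [← mul_div_assoc, div_lt_one (by positivity)] at hn

-- Behrend's construction with digits below `r = N ^ C` and modulus `N * r`: the density of the
-- sphere is `N ^ (-n)` up to factors polynomial in `n`, while the group has `(N * r) ^ n` elements.
theorem exists_isConvexSolutionFree {N : ℕ} (hN : 2 ≤ N) (M : ℝ) (C : ℕ) :
    ∃ (n m : ℕ) (S : Finset (Fin n → ZMod m)), m ≠ 0 ∧
      IsConvexSolutionFree N (S : Set (Fin n → ZMod m)) ∧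
      M < (#S / (m : ℝ) ^ n) ^ C * (m : ℝ) ^ n := by
  set r := N ^ C with hr
  have hr0 : 0 < r := by positivity
  obtain ⟨n, hn0, hn⟩ := exists_mul_pow_lt_pow hN (M * (r : ℝ) ^ (2 * C)) C
  obtain ⟨k, hk⟩ := Behrend.exists_large_sphere n r
  refine ⟨n, N * r, (Behrend.sphere n r k).image fun x t => (x t : ZMod (N * r)), by positivity,
    by rw [coe_image]; exact isConvexSolutionFree_image_sphere le_rfl n k, ?_⟩
  rw [card_image_natCast_sphere (Nat.le_mul_of_pos_left r (by omega))]
  push_cast at hk ⊢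
  calc M < (N : ℝ) ^ n / (n ^ C * r ^ (2 * C)) := by
        rw [lt_div_iff₀ (by positivity)]
        linarith
    _ = (r ^ n / (n * r ^ 2) / (N * r) ^ n) ^ C * (N * r) ^ n := by
        have hrn : (r : ℝ) ^ n = ((N : ℝ) ^ n) ^ C := by
          rw [hr, Nat.cast_pow, ← pow_mul, ← pow_mul, mul_comm]
        rw [mul_pow, div_pow, div_pow, mul_pow, mul_pow, ← hrn, pow_mul]
        field_simp
    _ ≤ _ := by gcongr

end ConvexSolutions

section StepGraph

variable {α : Type*} {A : Type*} [AddCommGroup A] {F : SimpleGraph α} {c : α → ℤ} {S : Finset A}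

/-- The Ruzsa–Szemerédi graph on `α × A`, in which an edge of `F` from `a` to `b` lifts to the edges
from `(a, x)` to `(b, x + (c b - c a) • s)` for `s ∈ S`. -/
def stepGraph (F : SimpleGraph α) (c : α → ℤ) (S : Finset A) : SimpleGraph (α × A) where
  Adj p q := F.Adj p.1 q.1 ∧ ∃ s ∈ S, q.2 - p.2 = (c q.1 - c p.1) • s
  symm := ⟨fun p q ⟨hadj, s, hs, h⟩ =>
    ⟨hadj.symm, s, hs, by rw [← neg_sub p.2, neg_eq_iff_eq_neg] at h; rw [h, ← neg_smul, neg_sub]⟩⟩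
  loopless := ⟨fun p h => h.1.ne rfl⟩

/-- The `F`-partition of `stepGraph F c S`. -/
def stepProj (F : SimpleGraph α) (c : α → ℤ) (S : Finset A) : stepGraph F c S →g F where
  toFun := Prod.fst
  map_rel' h := h.1

/-- The copy of `F` in `stepGraph F c S` with base point `x` and common difference `s`. -/
def stepCopy (F : SimpleGraph α) (c : α → ℤ) (x : A) (s : S) : F →g stepGraph F c S where
  toFun a := (a, x + c a • (s : A))
  map_rel' hab := ⟨hab, s, s.2, by rw [sub_smul, add_sub_add_left_eq_sub]⟩

theorem eq_and_eq_of_stepCopy_apply_eq {N : ℕ} (hS : IsConvexSolutionFree N (S : Set A))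
    (hc : Injective c) (hN : ∀ a b, 2 * |c a - c b| ≤ N) {x x' : A} {s s' : S} {a b : α}
    (hab : a ≠ b) (ha : stepCopy F c x s a = stepCopy F c x' s' a)
    (hb : stepCopy F c x s b = stepCopy F c x' s' b) : x = x' ∧ s = s' := by
  have ha : x + c a • (s : A) = x' + c a • (s' : A) := congrArg Prod.snd ha
  have hb : x + c b • (s : A) = x' + c b • (s' : A) := congrArg Prod.snd hb
  have hs : s = s' := Subtype.ext <|
    hS.eq_of_smul_eq s.2 s'.2 (sub_ne_zero.2 (hc.ne hab)) (hN a b) <| by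
      rw [sub_smul, sub_smul, ← add_sub_add_left_eq_sub _ _ x, ha, hb, add_sub_add_left_eq_sub]
  subst hs
  exact ⟨add_right_cancel ha, rfl⟩

theorem isCopyPacking_range_stepCopy {N : ℕ} (hS : IsConvexSolutionFree N (S : Set A))
    (hc : Injective c) (hN : ∀ a b, 2 * |c a - c b| ≤ N) :
    IsCopyPacking (stepProj F c S) (Set.range fun p : A × S => stepCopy F c p.1 p.2) where
  apply_apply := by
    rintro _ ⟨p, rfl⟩ a
    rfl
  eq_of_adj := by
    rintro _ ⟨⟨x, s⟩, rfl⟩ _ ⟨⟨x', s'⟩, rfl⟩ a b hab ha hb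
    obtain ⟨rfl, rfl⟩ := eq_and_eq_of_stepCopy_apply_eq hS hc hN hab.ne ha hb
    rfl

theorem uniformlyFarWith_stepGraph [Finite α] [Nontrivial α] [Finite A] {N : ℕ}
    (hS : IsConvexSolutionFree N (S : Set A)) (hc : Injective c)
    (hN : ∀ a b, 2 * |c a - c b| ≤ N) :
    UniformlyFarWith F (stepGraph F c S) (stepProj F c S) (#S / Nat.card (α × A)) := by
  refine (isCopyPacking_range_stepCopy hS hc hN).uniformlyFarWith fun v => ?_
  obtain ⟨a, y⟩ := v
  obtain ⟨b, hab⟩ := exists_ne a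
  have : Nonempty A := ⟨0⟩
  have hcard : (Nat.card (α × A) : ℝ) ≠ 0 := Nat.cast_ne_zero.2 Nat.card_pos.ne'
  have : Finite (F →g stepGraph F c S) := .of_injective _ DFunLike.coe_injective
  rw [div_mul_cancel₀ _ hcard, Nat.cast_le, ← Nat.card_eq_finsetCard S, ← Set.ncard_univ]
  refine Set.ncard_le_ncard_of_injOn (fun s => stepCopy F c (y - c a • (s : A)) s) ?_ ?_
    (Set.toFinite _)
  · rintro s -
    exact ⟨⟨(_, s), rfl⟩, Prod.ext rfl (sub_add_cancel y _)⟩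
  · rintro s - s' - h
    exact (eq_and_eq_of_stepCopy_apply_eq hS hc hN hab (DFunLike.congr_fun h b)
      (DFunLike.congr_fun h a)).2

theorem apply_eq_apply_of_forall_add_one {M : Type*} [AddCommGroup M] {ℓ : ℕ} [NeZero ℓ]
    {x : Fin ℓ → M} (hx : ∀ i, x (i + 1) = x i) (i j : Fin ℓ) : x i = x j := by
  wlog hij : i ≤ j generalizing i j
  · exact (this j i (le_of_not_ge hij)).symm
  · simpa [hx, eq_comm, sub_eq_zero] using sum_Ico_add_one_sub x hij

theorem colouredHoms_stepProj_subset {ℓ : ℕ} [NeZero ℓ] (hℓ : 2 ≤ ℓ) {σ : cycleGraph ℓ →g F}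
    {N : ℕ} (hS : IsConvexSolutionFree N (S : Set A)) (hc : Injective c)
    (hconvex : IsConvexEquation (cycleCoeff σ c)) (hN : ∑ i, |cycleCoeff σ c i| ≤ N) :
    colouredHoms σ (stepProj F c S) ⊆
      Set.range fun p : A × S => (stepCopy F c p.1 p.2).comp σ := by
  intro f hf
  have hcolor : ∀ i, (f i).1 = σ i := mem_colouredHoms.1 hf
  have hstep : ∀ i, ∃ s ∈ S, (f (i + 1)).2 - (f i).2 = cycleCoeff σ c i • s := fun i => by
    simpa only [hcolor, cycleCoeff] using (f.map_adj (cycleGraph_adj_add_one hℓ i)).2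
  choose s hs hstep using hstep
  have hsum : ∑ i, cycleCoeff σ c i • s i = 0 := by
    simp only [← hstep, sum_add_one_sub_eq_zero fun i => (f i).2]
  have hconst := hS hconvex (cycleCoeff_ne_zero hℓ σ hc) (sum_cycleCoeff σ c) hN hs hsum
  have hbase := apply_eq_apply_of_forall_add_one (x := fun i => (f i).2 - c (σ i) • s 0) fun i => by
    rw [sub_eq_sub_iff_sub_eq_sub, ← sub_smul, hstep i, hconst i 0, cycleCoeff]
  refine ⟨⟨(f 0).2 - c (σ 0) • s 0, s 0, hs 0⟩, RelHom.ext fun i => Prod.ext (hcolor i).symm ?_⟩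
  exact eq_sub_iff_add_eq.1 (hbase 0 i)

theorem ncard_colouredHoms_stepProj_le [Finite A] {ℓ : ℕ} [NeZero ℓ] (hℓ : 2 ≤ ℓ)
    {σ : cycleGraph ℓ →g F} {N : ℕ} (hS : IsConvexSolutionFree N (S : Set A)) (hc : Injective c)
    (hconvex : IsConvexEquation (cycleCoeff σ c)) (hN : ∑ i, |cycleCoeff σ c i| ≤ N) :
    (colouredHoms σ (stepProj F c S)).ncard ≤ Nat.card A * #S := by
  rw [← Nat.card_eq_finsetCard S, ← Nat.card_prod]
  exact (Set.ncard_le_ncard (colouredHoms_stepProj_subset hℓ hS hc hconvex hN)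
    (Set.finite_range _)).trans (Finite.card_range_le _)

end StepGraph

section InjectiveCycles

universe u

variable {α : Type u} {F : SimpleGraph α}

theorem pow_mul_le_of_mul_rpow_mul_pow_le {c₀ C₀ s k N : ℝ} {C ℓ : ℕ} (hc₀ : 0 < c₀) (hs : 0 < s)
    (hsN : s ≤ N) (hN : 1 ≤ N) (hk : 1 ≤ k) (hC : C₀ ≤ C) (hℓ : 3 ≤ ℓ)
    (h : c₀ * (s / (k * N)) ^ C₀ * (k * N) ^ ℓ ≤ N * s) : (s / N) ^ C * N ≤ k ^ C / c₀ := by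
  have hpow : (s / (k * N)) ^ C ≤ (s / (k * N)) ^ C₀ := by
    rw [← Real.rpow_natCast]
    refine Real.rpow_le_rpow_of_exponent_ge (by positivity) ?_ hC
    rw [div_le_one (by positivity)]
    nlinarith
  have hsize : N ^ 3 ≤ (k * N) ^ ℓ := by
    have hkN : N ≤ k * N := le_mul_of_one_le_left (by positivity) hk
    exact (pow_le_pow_left₀ (by positivity) hkN 3).trans (pow_le_pow_right₀ (hN.trans hkN) hℓ)
  rw [le_div_iff₀ hc₀]
  refine le_of_mul_le_mul_right ?_ (show 0 < N ^ 2 / k ^ C by positivity)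
  calc (s / N) ^ C * N * c₀ * (N ^ 2 / k ^ C) = c₀ * (s / (k * N)) ^ C * N ^ 3 := by
        rw [div_pow, div_pow, mul_pow]
        field_simp
    _ ≤ c₀ * (s / (k * N)) ^ C₀ * (k * N) ^ ℓ := by gcongr
    _ ≤ N * s := h
    _ ≤ k ^ C * (N ^ 2 / k ^ C) := by
        rw [mul_div_cancel₀ _ (by positivity)]
        nlinarith

theorem exists_nat_bound_cycleCoeff [Finite α] {ℓ : ℕ} [NeZero ℓ] (σ : Fin ℓ → α) (c : α → ℤ) :
    ∃ N : ℕ, 2 ≤ N ∧ (∀ a b, 2 * |c a - c b| ≤ N) ∧ ∑ i, |cycleCoeff σ c i| ≤ N := by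
  obtain ⟨B, hB⟩ := Finite.exists_le fun p : α × α => 2 * |c p.1 - c p.2|
  refine ⟨max 2 (max B (∑ i, |cycleCoeff σ c i|)).toNat, le_max_left _ _, fun a b => ?_, ?_⟩
  · have := hB (a, b)
    grind
  · grind

theorem not_homAbundant_of_injective [Finite α] {ℓ : ℕ} [NeZero ℓ] (hℓ : 3 ≤ ℓ)
    {σ : cycleGraph ℓ →g F} (hσ : Injective σ) : ¬ HomAbundant.{u} σ := by
  rintro ⟨c₀, C₀, hc₀, hC₀, habundant⟩
  have hℓ2 : 2 ≤ ℓ := by omega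
  have : Nontrivial α := ⟨σ 0, σ (0 + 1), (σ.map_adj (cycleGraph_adj_add_one hℓ2 0)).ne⟩
  obtain ⟨c, hc, hconvex⟩ := exists_isConvexEquation_cycleCoeff hℓ2 hσ
  obtain ⟨N, hN2, hNc, hNσ⟩ := exists_nat_bound_cycleCoeff σ c
  obtain ⟨n, m, S, hm, hS, hSlarge⟩ :=
    exists_isConvexSolutionFree hN2 ((Nat.card α : ℝ) ^ ⌈C₀⌉₊ / c₀) ⌈C₀⌉₊
  have : NeZero m := ⟨hm⟩
  have hcard : ((Nat.card (Fin n → ZMod m) : ℕ) : ℝ) = (m : ℝ) ^ n := by simp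
  rw [← hcard] at hSlarge
  have hk : 1 < (Nat.card α : ℝ) := Nat.one_lt_cast.2 Finite.one_lt_card
  have hM : 1 ≤ (Nat.card (Fin n → ZMod m) : ℝ) := Nat.one_le_cast.2 Nat.card_pos
  have hSM : (#S : ℝ) ≤ Nat.card (Fin n → ZMod m) := by
    rw [Nat.card_eq_fintype_card]
    exact Nat.cast_le.2 S.card_le_univ
  have hS0 : 0 < (#S : ℝ) := by
    refine (Nat.cast_nonneg _).lt_of_ne' fun h => hSlarge.not_ge ?_
    rw [h, zero_div, zero_pow (Nat.ceil_pos.2 hC₀).ne', zero_mul]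
    positivity
  refine hSlarge.not_ge <|
    pow_mul_le_of_mul_rpow_mul_pow_le hc₀ hS0 hSM hM hk.le (Nat.le_ceil C₀) hℓ ?_
  have hfar := uniformlyFarWith_stepGraph (F := F) hS hc hNc
  rw [Nat.card_prod, Nat.cast_mul] at hfar
  have hhoms :=
    habundant _ (by positivity) ((div_lt_one (by positivity)).2 (by nlinarith)) _ _ _ hfar
  rw [Nat.card_prod, Nat.cast_mul, Nat.card_fin] at hhoms
  refine hhoms.trans ?_
  exact_mod_cast ncard_colouredHoms_stepProj_le hℓ2 hS hc hconvex hNσ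

theorem colouredAbundant_cycleGraph_iff [Finite α] {ℓ : ℕ} [NeZero ℓ] (hℓ : 3 ≤ ℓ)
    (σ : cycleGraph ℓ →g F) : ColouredAbundant F (cycleGraph ℓ) σ ↔ ¬ Injective σ := by
  refine ⟨fun h hσ => ?_, fun hσ => (homAbundant_of_not_injective hσ).colouredAbundant⟩
  have : Nontrivial α :=
    ⟨σ 0, σ (0 + 1), (σ.map_adj (cycleGraph_adj_add_one (by omega) 0)).ne⟩
  exact not_homAbundant_of_injective hℓ hσ h.homAbundant

end InjectiveCycles

/-- Let `(C, σ)` be an `F`-coloured cycle of length `ℓ ≥ 3`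
(the cycle `cycleGraph ℓ` on `Fin ℓ`, with edges `{i, i+1}`).  For an injection
`c : V(F) → ℤ`, the cycle-equation of `C` has coefficient `c(σ(i+1)) − c(σ(i))`
on the edge `{i, i+1}` (these coefficients are nonzero and sum to zero).  Then the
following are equivalent: (1) `(C, σ)` is `F`-abundant as a coloured graph;
(2) for every injection `c`, the cycle-equation is not convex (i.e. it is not the
case that exactly one coefficient is negative and all others nonnegative); (3) for
every injection `c`, the cycle-equation has genus at least 2 (here expressed as the
existence of a partition of the index set into two nonempty parts, each with zero
coefficient sum, which is equivalent). -/
theorem stmt_17 {α : Type*} [Fintype α] (F : SimpleGraph α)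
    (ℓ : ℕ) [NeZero ℓ] (hℓ : 3 ≤ ℓ)
    (σ : SimpleGraph.cycleGraph ℓ →g F) :
    (ColouredAbundant F (SimpleGraph.cycleGraph ℓ) σ ↔
      ∀ c : α → ℤ, Function.Injective c →
        ¬ ∃ i₀ : Fin ℓ, (c (σ (i₀ + 1)) - c (σ i₀) < 0) ∧
          ∀ j : Fin ℓ, j ≠ i₀ → 0 ≤ c (σ (j + 1)) - c (σ j)) ∧
    ((∀ c : α → ℤ, Function.Injective c →
      ¬ ∃ i₀ : Fin ℓ, (c (σ (i₀ + 1)) - c (σ i₀) < 0) ∧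
        ∀ j : Fin ℓ, j ≠ i₀ → 0 ≤ c (σ (j + 1)) - c (σ j)) ↔
      ∀ c : α → ℤ, Function.Injective c →
        ∃ T : Finset (Fin ℓ), T.Nonempty ∧ Tᶜ.Nonempty ∧
          ∑ i ∈ T, (c (σ (i + 1)) - c (σ i)) = 0 ∧
          ∑ i ∈ Tᶜ, (c (σ (i + 1)) - c (σ i)) = 0) := by
  have hconvex := forall_not_isConvexEquation_cycleCoeff_iff (by omega : 2 ≤ ℓ) σ
  have hgenus := forall_hasGenusAtLeastTwo_cycleCoeff_iff (by omega : 2 ≤ ℓ) σ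
  exact ⟨(colouredAbundant_cycleGraph_iff hℓ σ).trans hconvex.symm, hconvex.trans hgenus.symm⟩
end

section
/- Let (H, σ) be a K₃-coloured graph, i.e., H is a graph and σ : V(H) → ℤ/3 assigns distinct colours to adjacent vertices. Then the following are equivalent: (1) for every injection c : ℤ/3 → ℤ and every cycle of H, the cycle-equation of that cycle with respect to σ and c is symmetric; (2) there is a colour homomorphism from (H, σ) to P∞³, i.e., a graph homomorphism γ from H to the infinite path on vertex set ℤ (with n adjacent to n+1) such that γ(v) mod 3 = σ(v) for every vertex v of H. -/
/-! An integer list is symmetric exactly when every odd integer-valued function sums to zero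
over it. Both directions then concern potentials, i.e. functions on the vertices whose increments
along darts are prescribed by an odd function; one exists as soon as the prescribed increments sum
to zero around every cycle.

* For `c = ZMod.valMinAbs`, reduction modulo 3 recovers the step `σ y - σ x` from the coefficient of
  the dart from `x` to `y`, as an odd function of it. So symmetry yields an integer potential with
  increments `(σ y - σ x).valMinAbs = ±1`, and modulo 3 it differs from `σ` by a function that is
  constant on components, which can be corrected.
* Conversely, every odd function on the darts of `P∞³` has a potential because `P∞³` is a path, and
  `γ` pulls it back to `H`; hence the sums around cycles of `H` vanish. -/

section SymmetricLists

variable {α : Type*} [DecidableEq α]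

/-- Symmetry of the linear equation with coefficient list `L`: every value occurs as often as its
negative. -/
def IsNegSymmetric [Neg α] (L : List α) : Prop :=
  ∀ t, L.count t = L.count (-t)

variable [InvolutiveNeg α] {L : List α}

lemma IsNegSymmetric.map_neg_perm (hL : IsNegSymmetric L) : (L.map Neg.neg).Perm L := by
  refine List.perm_iff_count.2 fun t => ?_
  calc (L.map Neg.neg).count t = (L.map Neg.neg).count (- -t) := by rw [neg_neg]
    _ = L.count (-t) := List.count_map_of_injective L Neg.neg neg_injective (-t)
    _ = L.count t := (hL t).symm

lemma IsNegSymmetric.sum_map_odd_eq_zero {A : Type*} [AddCommGroup A] [IsAddTorsionFree A]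
    (hL : IsNegSymmetric L) {g : α → A} (hg : g.Odd) : (L.map g).sum = 0 := by
  refine self_eq_neg.1 ?_
  calc (L.map g).sum = ((L.map Neg.neg).map g).sum := ((hL.map_neg_perm.map g).sum_eq).symm
    _ = (L.map fun x => -g x).sum := by simp only [List.map_map, Function.comp_def, hg.eq]
    _ = -(L.map g).sum := Multiset.sum_map_neg (m := (L : Multiset α))

lemma isNegSymmetric_of_sum_map_odd_eq_zero
    (h : ∀ g : α → ℤ, g.Odd → (L.map g).sum = 0) : IsNegSymmetric L := by
  intro t
  let signedIndicator (x : α) : ℤ := (if x = t then 1 else 0) - (if x = -t then 1 else 0)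
  have odd_signedIndicator : signedIndicator.Odd := fun x => by
    simp only [signedIndicator, neg_eq_iff_eq_neg, neg_neg, neg_sub]
  have sum_eq : (L.map signedIndicator).sum = L.count t - L.count (-t) := by
    calc (L.map signedIndicator).sum
        = (L.map fun x => if x = t then (1 : ℤ) else 0).sum -
            (L.map fun x => if x = -t then (1 : ℤ) else 0).sum :=
          Multiset.sum_map_sub (m := (L : Multiset α))
      _ = _ := by simp [List.sum_map_ite_eq]
  have := h signedIndicator odd_signedIndicator
  omega

end SymmetricLists

section Potentials

open SimpleGraph

variable {V A : Type*} {G : SimpleGraph V} [AddGroup A] {f : G.Dart → A} {u v : V}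

lemma add_sum_map_darts_of_potential {φ : V → A} (hφ : ∀ d, φ d.fst + f d = φ d.snd)
    (p : G.Walk u v) : φ u + (p.darts.map f).sum = φ v := by
  induction p with
  | nil => simp
  | @cons x y _ hxy p ih =>
    have first_step : φ x + f ⟨(x, y), hxy⟩ = φ y := hφ ⟨(x, y), hxy⟩
    rw [Walk.darts_cons, List.map_cons, List.sum_cons, ← add_assoc, first_step, ih]

lemma sum_map_darts_reverse (hf : ∀ d, f d.symm = -f d) (p : G.Walk u v) :
    (p.reverse.darts.map f).sum = -(p.darts.map f).sum := by
  simp [Walk.darts_reverse, List.sum_neg_reverse, Function.comp_def, hf]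

lemma sum_map_darts_bypass [DecidableEq V] (hf : ∀ d, f d.symm = -f d)
    (hcycle : ∀ (x : V) (w : G.Walk x x), w.IsCycle → (w.darts.map f).sum = 0) (p : G.Walk u v) :
    (p.bypass.darts.map f).sum = (p.darts.map f).sum := by
  induction p with
  | nil => rfl
  | @cons u v _ huv p ih =>
    rw [Walk.darts_cons, List.map_cons, List.sum_cons, ← ih, Walk.bypass]
    split_ifs with hu
    · let q := p.bypass.takeUntil u hu
      have hq : q.IsPath := p.bypass_isPath.takeUntil hu
      have loop_sum : f ⟨(u, v), huv⟩ + (q.darts.map f).sum = 0 := by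
        by_cases huv_mem : s(u, v) ∈ q.edges
        · have : q = huv.symm.toWalk := hq.eq_adj_toWalk_of_mem_edges (Sym2.eq_swap ▸ huv_mem)
          rw [this, Adj.darts_toWalk, List.map_singleton, List.sum_singleton]
          exact add_eq_zero_iff_eq_neg'.2 (hf ⟨(u, v), huv⟩)
        · exact hcycle u (.cons huv q) ((Walk.cons_isCycle_iff q huv).2 ⟨hq, huv_mem⟩)
      have split_sum := congrArg (fun r => (r.darts.map f).sum) (p.bypass.take_spec hu)
      rw [Walk.darts_append, List.map_append, List.sum_append] at split_sum
      rw [← split_sum, ← add_assoc, loop_sum, zero_add]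
    · rw [Walk.darts_cons, List.map_cons, List.sum_cons]

lemma sum_map_darts_eq_zero (hf : ∀ d, f d.symm = -f d)
    (hcycle : ∀ (x : V) (w : G.Walk x x), w.IsCycle → (w.darts.map f).sum = 0)
    (p : G.Walk v v) : (p.darts.map f).sum = 0 := by
  classical
  rw [← sum_map_darts_bypass hf hcycle, (Walk.isPath_iff_nil.1 p.bypass_isPath).eq_nil]
  rfl

lemma sum_map_darts_eq_sum_map_darts (hf : ∀ d, f d.symm = -f d)
    (hcycle : ∀ (x : V) (w : G.Walk x x), w.IsCycle → (w.darts.map f).sum = 0)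
    (p q : G.Walk u v) : (p.darts.map f).sum = (q.darts.map f).sum := by
  have := sum_map_darts_eq_zero hf hcycle (p.append q.reverse)
  rwa [Walk.darts_append, List.map_append, List.sum_append, sum_map_darts_reverse hf,
    add_neg_eq_zero] at this

theorem exists_potential_of_cycle_sums_eq_zero (hf : ∀ d, f d.symm = -f d)
    (hcycle : ∀ (x : V) (w : G.Walk x x), w.IsCycle → (w.darts.map f).sum = 0) :
    ∃ φ : V → A, ∀ d, φ d.fst + f d = φ d.snd := by
  let root (v : V) : V := (G.connectedComponentMk v).out
  have walk_from_root (v : V) : Nonempty (G.Walk (root v) v) :=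
    ConnectedComponent.exact (Quot.out_eq (G.connectedComponentMk v))
  have root_eq (d : G.Dart) : root d.fst = root d.snd :=
    congrArg Quot.out (ConnectedComponent.sound d.adj.reachable)
  refine ⟨fun v => ((walk_from_root v).some.darts.map f).sum, fun d => ?_⟩
  let p := (walk_from_root d.fst).some.concat d.adj
  calc _ = (p.darts.map f).sum := by simp [p, Walk.darts_concat]
    _ = ((p.copy (root_eq d) rfl).darts.map f).sum := by rw [Walk.darts_copy]
    _ = _ := sum_map_darts_eq_sum_map_darts hf hcycle _ _

theorem exists_potential_lift_of_cycle_sums_eq_zero {B : Type*} [AddGroup B] {π : A →+ B}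
    (hπ : Function.Surjective π) {σ : V → B} (hfσ : ∀ d, σ d.fst + π (f d) = σ d.snd)
    (hf : ∀ d, f d.symm = -f d)
    (hcycle : ∀ (x : V) (w : G.Walk x x), w.IsCycle → (w.darts.map f).sum = 0) :
    ∃ φ : V → A, (∀ d, φ d.fst + f d = φ d.snd) ∧ ∀ v, π (φ v) = σ v := by
  obtain ⟨φ, hφ⟩ := exists_potential_of_cycle_sums_eq_zero hf hcycle
  obtain ⟨lift, hlift⟩ := hπ.hasRightInverse
  let defect (v : V) : B := σ v - π (φ v)
  have defect_eq (d : G.Dart) : defect d.fst = defect d.snd := by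
    simp only [defect, ← hfσ d, ← hφ d, map_add, add_sub_add_right_eq_sub]
  refine ⟨fun v => lift (defect v) + φ v, fun d => ?_, fun v => ?_⟩
  · rw [add_assoc, hφ, defect_eq]
  · rw [map_add, hlift, sub_add_cancel]

end Potentials

section IntegerLine

variable {A : Type*} [AddCommGroup A]

lemma exists_forall_add_eq_apply_add_one (h : ℤ → A) : ∃ ψ : ℤ → A, ∀ n, ψ n + h n = ψ (n + 1) := by
  refine ⟨fun n => ∑ i ∈ Finset.Ico 0 n, h i - ∑ i ∈ Finset.Ico n 0, h i, fun n => ?_⟩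
  dsimp only
  rcases le_or_gt 0 n with hn | hn
  · rw [← Finset.sum_Ico_add_eq_sum_Ico_add_one hn, Finset.Ico_eq_empty_of_le hn,
      Finset.Ico_eq_empty_of_le (show (0 : ℤ) ≤ n + 1 by omega), Finset.sum_empty]
    abel
  · have sum_succ : ∑ i ∈ Finset.Ico n 0, h i = h n + ∑ i ∈ Finset.Ico (n + 1) 0, h i := by
      rw [← Finset.insert_Ico_add_one_left_eq_Ico hn, Finset.sum_insert (by simp)]
    rw [sum_succ, Finset.Ico_eq_empty_of_le hn.le,
      Finset.Ico_eq_empty_of_le (show n + 1 ≤ 0 by omega), Finset.sum_empty]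
    abel

lemma exists_potential_int {F : ℤ → ℤ → A} (hF : ∀ m n, F n m = -F m n) :
    ∃ ψ : ℤ → A, ∀ m n, m - n = 1 ∨ n - m = 1 → ψ m + F m n = ψ n := by
  obtain ⟨ψ, hψ⟩ := exists_forall_add_eq_apply_add_one fun n => F n (n + 1)
  refine ⟨ψ, fun m n hmn => ?_⟩
  rcases hmn with h | h
  · obtain rfl : m = n + 1 := by omega
    rw [hF, ← hψ, add_neg_cancel_right]
  · obtain rfl : n = m + 1 := by omega
    exact hψ m

end IntegerLine

section CycleEquations

variable {V K A : Type*} {G : SimpleGraph V} {u v : V}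

/-- The coefficients of the equation of a walk `w` for the vertex colouring `σ` and the weights `c`
of the colours; for a cycle `w` these are the coefficients of its cycle-equation. -/
def walkCoeffs [Sub A] (c : K → A) (σ : V → K) (w : G.Walk u v) : List A :=
  w.darts.map fun d => c (σ d.snd) - c (σ d.fst)

lemma isNegSymmetric_walkCoeffs_int [AddGroup A] [DecidableEq A] (c : ℤ → A) {γ : V → ℤ}
    (hγ : ∀ x y, G.Adj x y → γ x - γ y = 1 ∨ γ y - γ x = 1) (w : G.Walk v v) :
    IsNegSymmetric (walkCoeffs c γ w) := by
  refine isNegSymmetric_of_sum_map_odd_eq_zero fun g hg => ?_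
  obtain ⟨ψ, hψ⟩ := exists_potential_int (F := fun m n => g (c n - c m))
    fun m n => by rw [← hg, neg_sub]
  have := add_sum_map_darts_of_potential (φ := ψ ∘ γ)
    (fun d : G.Dart => hψ (γ d.fst) (γ d.snd) (hγ _ _ d.adj)) w
  rw [walkCoeffs, List.map_map]
  exact add_eq_left.1 this

lemma valMinAbs_neg_of_odd {n : ℕ} (hn : Odd n) (a : ZMod n) :
    (-a).valMinAbs = -a.valMinAbs :=
  ZMod.valMinAbs_neg_of_ne_half fun h => Nat.not_even_iff_odd.2 hn ⟨a.val, by omega⟩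

theorem exists_lift_of_isNegSymmetric_walkCoeffs {n : ℕ} (hn : Odd n) {σ : V → ZMod n}
    (h : ∀ (x : V) (w : G.Walk x x), w.IsCycle → IsNegSymmetric (walkCoeffs ZMod.valMinAbs σ w)) :
    ∃ γ : V → ℤ, (∀ d : G.Dart, γ d.fst + (σ d.snd - σ d.fst).valMinAbs = γ d.snd) ∧
      ∀ v, (γ v : ZMod n) = σ v := by
  refine exists_potential_lift_of_cycle_sums_eq_zero (π := Int.castAddHom (ZMod n))
    ZMod.intCast_surjective (fun d => ?_) (fun d => ?_) fun x w hw => ?_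
  · simp
  · simp [← valMinAbs_neg_of_odd hn]
  · have odd_step : Function.Odd fun k : ℤ => (k : ZMod n).valMinAbs := fun k => by
      simp only [Int.cast_neg, valMinAbs_neg_of_odd hn]
    simpa [walkCoeffs, Function.comp_def] using (h x w hw).sum_map_odd_eq_zero odd_step

lemma valMinAbs_eq_one_or_eq_neg_one {a : ZMod 3} (ha : a ≠ 0) :
    a.valMinAbs = 1 ∨ a.valMinAbs = -1 := by
  revert a; decide

end CycleEquations

/-- Let `(H, σ)` be a `K₃`-coloured graph (`σ : V(H) → ℤ/3` with
adjacent vertices receiving distinct colours).  The following are equivalent: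
(1) for every injection `c : ℤ/3 → ℤ` and every cycle of `H`, the cycle-equation
(whose list of coefficients is `c(σ(v_{i+1})) − c(σ(v_i))` over the darts of the
cycle) is symmetric, i.e. for every integer `t` the number of coefficients equal to `t`
equals the number of coefficients equal to `−t`;
(2) there is a colour homomorphism from `(H, σ)` to `P∞³`: a map `γ : V(H) → ℤ` with
`|γ(x) − γ(y)| = 1` for every edge `xy` of `H` and `γ(v) ≡ σ(v) (mod 3)` for every
vertex `v`. -/
theorem stmt_18 {β : Type*} (H : SimpleGraph β) (σ : β → ZMod 3)
    (hσ : ∀ x y, H.Adj x y → σ x ≠ σ y) :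
    (∀ c : ZMod 3 → ℤ, Function.Injective c →
      ∀ (v : β) (w : H.Walk v v), w.IsCycle → ∀ t : ℤ,
        (w.darts.map (fun d => c (σ d.toProd.2) - c (σ d.toProd.1))).count t =
        (w.darts.map (fun d => c (σ d.toProd.2) - c (σ d.toProd.1))).count (-t)) ↔
    (∃ γ : β → ℤ,
      (∀ x y, H.Adj x y → γ x - γ y = 1 ∨ γ y - γ x = 1) ∧
      ∀ v, ((γ v : ZMod 3) = σ v)) := by
  constructor
  · intro h
    obtain ⟨γ, hγ, hγσ⟩ := exists_lift_of_isNegSymmetric_walkCoeffs (n := 3) (by decide)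
      (h ZMod.valMinAbs ZMod.injective_valMinAbs)
    refine ⟨γ, fun x y hxy => ?_, hγσ⟩
    have increment : γ x + (σ y - σ x).valMinAbs = γ y := hγ ⟨(x, y), hxy⟩
    have step := valMinAbs_eq_one_or_eq_neg_one (sub_ne_zero.2 (hσ x y hxy).symm)
    omega
  · rintro ⟨γ, hγ, hγσ⟩ c - v w -
    obtain rfl : (fun v => (γ v : ZMod 3)) = σ := funext hγσ
    exact isNegSymmetric_walkCoeffs_int (fun n : ℤ => c n) hγ w
end
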